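/- arXiv:1012.2793 — 2 statements merged into one kernel-verified Lean document; each statement's English description precedes it below -/
import Mathlib

section
/- Let f ∈ ℤ[T] be a monic squarefree polynomial of degree ≥ 1, and let κ be the number of irreducible factors of f in ℚ[T]. For a prime p let ρ_f(p) = |{α ∈ ℤ/pℤ : f(α) ≡ 0 (mod p)}|. Then there exists a constant C ≥ 0 such that for all x ≥ 3, |Σ_{p ≤ x} ρ_f(p)/p − κ log log x| ≤ C, where the sum is over primes p ≤ x. -/
/-- `rhoF f d` is the number of residues `α ∈ ℤ/dℤ` with `f(α) ≡ 0 (mod d)`. -/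
noncomputable def rhoF (f : Polynomial ℤ) (d : ℕ) : ℕ :=
  Nat.card {α : ZMod d // Polynomial.aeval α f = 0}

/-- The number of irreducible factors (with multiplicity) of `f` viewed in `ℚ[T]`. -/
noncomputable def numIrredFactors (f : Polynomial ℤ) : ℕ :=
  Multiset.card
    (UniqueFactorizationMonoid.normalizedFactors (f.map (Int.castRingHom ℚ)))

/-!
For irreducible `f`, let `θ` be a root of `f` and `K = ℚ(θ)`. By the Kummer–Dedekind theorem
`ρ_f(p)` is, for all but finitely many `p`, the number of ideals of `𝓞 K` of norm `p`, that is, the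
`p`-th coefficient of the Dedekind zeta function of `K`. Taking the logarithm of its Euler product,
whose prime-power terms contribute `O(1)`, the simple pole at `1` gives
`∑ ρ_f(p) p ^ (-s) = log (1 / (s - 1)) + O(1)` as `s → 1⁺`.

At `s = 1 + 1 / log x` the term at `p` of this series equals `(ρ_f(p) / p) e ^ (-t)` with
`t = log p / log x`, while the sum over `p ≤ x` has the weight `1_{t ≤ 1}` instead of `e ^ (-t)`.
These weights differ by at most `3 (e ^ (-t / 2) - e ^ (-t))`, so, as `ρ_f ≥ 0`, the sum and the
series differ by at most three times the difference of the values of the series at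
`1 + 1 / (2 log x)` and `1 + 1 / log x`, which is `log 2 + O(1)`.

If `f = g h` is squarefree then `g` and `h` are coprime over `ℚ`, so they have no common root modulo
`p` unless `p` divides their resultant, and `ρ_f(p) = ρ_g(p) + ρ_h(p)` for all other `p`.
-/

open Filter Topology Asymptotics Real

/-- The sum of `w p / p` over the primes `p ≤ x`. -/
noncomputable def mertensSum (w : ℕ → ℝ) (x : ℝ) : ℝ :=
  ∑ p ∈ (Finset.range (⌊x⌋₊ + 1)).filter Nat.Prime, w p / p

/-- The weight `w` has Mertens density `κ` on the primes: as `x → ∞`, the sum of `w p / p` over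
`p ≤ x` is `κ * log (log x) + O(1)`. Only the values of `w` at primes matter. -/
def HasMertensDensity (w : ℕ → ℝ) (κ : ℝ) : Prop :=
  (fun x : ℝ => mertensSum w x - κ * log (log x)) =O[atTop] (fun _ => (1 : ℝ))

theorem mertensSum_mono {w : ℕ → ℝ} (hw : ∀ p, 0 ≤ w p) : Monotone (mertensSum w) := by
  intro x y hxy
  refine Finset.sum_le_sum_of_subset_of_nonneg
    (Finset.filter_subset_filter _ (Finset.range_mono ?_))
    fun p _ _ => div_nonneg (hw p) p.cast_nonneg
  gcongr

theorem abs_mertensSum_le (w : ℕ → ℝ) (x : ℝ) : |mertensSum w x| ≤ mertensSum (|w ·|) x := by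
  refine (Finset.abs_sum_le_sum_abs _ _).trans_eq ?_
  simp only [mertensSum, abs_div, Nat.abs_cast]

theorem mertensSum_add (u v : ℕ → ℝ) (x : ℝ) :
    mertensSum (fun n => u n + v n) x = mertensSum u x + mertensSum v x := by
  simp only [mertensSum, add_div, Finset.sum_add_distrib]

namespace HasMertensDensity

variable {u v w : ℕ → ℝ} {κ μ : ℝ}

theorem zero : HasMertensDensity (fun _ => 0) 0 := by
  refine (isBigO_zero (E' := ℝ) _ _).congr_left fun x => ?_
  simp only [mertensSum, zero_div, Finset.sum_const_zero, zero_mul, sub_zero]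

theorem add (hu : HasMertensDensity u κ) (hv : HasMertensDensity v μ) :
    HasMertensDensity (fun n => u n + v n) (κ + μ) := by
  refine (IsBigO.add hu hv).congr_left fun x => ?_
  rw [mertensSum_add]
  ring

theorem congr_of_not_dvd {d : ℕ} (hd : d ≠ 0) (huv : ∀ p : ℕ, p.Prime → ¬ p ∣ d → u p = v p)
    (hu : HasMertensDensity u κ) : HasMertensDensity v κ := by
  have hdiff : (fun x => mertensSum v x - mertensSum u x) =O[atTop] (fun _ => (1 : ℝ)) := by
    refine IsBigO.of_bound (∑ p ∈ d.primeFactors, |v p / p - u p / p|) (.of_forall fun x => ?_)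
    rw [norm_one, mul_one, norm_eq_abs, mertensSum, mertensSum, ← Finset.sum_sub_distrib]
    refine (Finset.abs_sum_le_sum_abs _ _).trans ?_
    rw [← Finset.sum_filter_ne_zero]
    refine Finset.sum_le_sum_of_subset_of_nonneg (fun p hp => ?_) fun p _ _ => abs_nonneg _
    obtain ⟨hp, hne⟩ := Finset.mem_filter.mp hp
    have hprime := (Finset.mem_filter.mp hp).2
    refine Nat.mem_primeFactors.mpr ⟨hprime, by_contra fun hpd => hne ?_, hd⟩
    rw [huv p hprime hpd, sub_self, abs_zero]
  refine (IsBigO.add hu hdiff).congr_left fun x => ?_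
  ring

theorem exists_bound (h : HasMertensDensity w κ) {a : ℝ} (ha : 1 < a) :
    ∃ C : ℝ, ∀ x : ℝ, a ≤ x → |mertensSum w x - κ * log (log x)| ≤ C := by
  obtain ⟨c, hc⟩ := h.bound
  obtain ⟨b, hb⟩ := eventually_atTop.mp hc
  refine ⟨max c (mertensSum (|w ·|) b + |κ| * max |log (log a)| |log (log b)|),
    fun x hx => ?_⟩
  rcases le_total b x with hbx | hxb
  · exact le_max_of_le_left (by simpa using hb x hbx)
  · refine le_max_of_le_right ((abs_sub _ _).trans (add_le_add ?_ ?_))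
    · exact (abs_mertensSum_le w x).trans (mertensSum_mono (fun p => abs_nonneg _) hxb)
    · rw [abs_mul]
      have hloga : 0 < log a := log_pos ha
      have hax : log a ≤ log x := log_le_log (by linarith) hx
      have hxb : log x ≤ log b := log_le_log (by linarith) hxb
      gcongr
      exact abs_le_max_abs_abs (log_le_log hloga hax) (log_le_log (hloga.trans_le hax) hxb)

end HasMertensDensity

/-- The Dirichlet series `∑ w p * p ^ (-s)` over the primes, at a real point `s`. -/
noncomputable def primeDirichletSum (w : ℕ → ℝ) (s : ℝ) : ℝ :=
  ∑' p : Nat.Primes, w p * (p : ℝ) ^ (-s)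

theorem hasSum_ite_le_mertensSum (w : ℕ → ℝ) {x : ℝ} (hx : 0 ≤ x) :
    HasSum (fun p : Nat.Primes => if (p : ℝ) ≤ x then w p / p else 0) (mertensSum w x) := by
  have hsum : mertensSum w x = ∑ p ∈ Finset.range (⌊x⌋₊ + 1),
      {p | p.Prime}.indicator (fun p : ℕ => if (p : ℝ) ≤ x then w p / p else 0) p := by
    rw [mertensSum, Finset.sum_filter]
    refine Finset.sum_congr rfl fun p hp => ?_
    rw [Finset.mem_range, Nat.lt_succ_iff, Nat.le_floor_iff hx] at hp
    simp only [Set.indicator_apply, Set.mem_ofPred_eq, if_pos hp]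
  rw [hsum]
  refine (hasSum_subtype_iff_indicator (s := {p : ℕ | p.Prime})).mpr
    (hasSum_sum_of_ne_finset_zero fun p hp => ?_)
  rw [Finset.mem_range, Nat.lt_succ_iff, Nat.le_floor_iff hx] at hp
  simp only [Set.indicator_apply, if_neg hp, ite_self]

theorem abs_indicator_sub_exp_neg_le {t : ℝ} (ht : 0 ≤ t) :
    |(if t ≤ 1 then 1 else 0) - exp (-t)| ≤ 3 * (exp (-(t / 2)) - exp (-t)) := by
  -- With `u = exp (-(t / 2))`, the claim is `1 - u ^ 2 ≤ 3 * (u - u ^ 2)` for `t ≤ 1`, true for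
  -- `1 / 2 ≤ u ≤ 1`, and `u ^ 2 ≤ 3 * (u - u ^ 2)` for `1 < t`, true for `0 ≤ u ≤ 3 / 4`.
  set u := exp (-(t / 2)) with hu
  have hsq : exp (-t) = u ^ 2 := by rw [hu, ← exp_nat_mul]; ring_nf
  have hu0 : 0 < u := exp_pos _
  have hu1 : u ≤ 1 := exp_le_one_iff.mpr (by linarith)
  rw [hsq]
  split_ifs with h
  · have hhalf : 1 / 2 ≤ u := by linarith [add_one_le_exp (-(t / 2))]
    rw [abs_of_nonneg (by nlinarith)]
    nlinarith
  · have hu23 : u ≤ 2 / 3 := by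
      rw [hu, exp_neg]
      have := add_one_le_exp (t / 2)
      exact (inv_anti₀ (by norm_num) (by linarith : (3 / 2 : ℝ) ≤ exp (t / 2))).trans (by norm_num)
    rw [zero_sub, abs_neg, abs_of_nonneg (sq_nonneg u)]
    nlinarith

section Tauberian

variable {w : ℕ → ℝ} {κ : ℝ}

theorem abs_mertensSum_sub_primeDirichletSum_le (hw : ∀ p, 0 ≤ w p)
    (hsum : ∀ s : ℝ, 1 < s → Summable fun p : Nat.Primes => w p * (p : ℝ) ^ (-s))
    {x : ℝ} (hx : 1 < x) :
    |mertensSum w x - primeDirichletSum w (1 + 1 / log x)| ≤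
      3 * (primeDirichletSum w (1 + 1 / (2 * log x)) - primeDirichletSum w (1 + 1 / log x)) := by
  have hL : 0 < log x := log_pos hx
  have hs₁ := (hsum (1 + 1 / log x) (by simpa using hL)).hasSum
  have hs₂ := (hsum (1 + 1 / (2 * log x)) (by simpa using hL)).hasSum
  refine ((hasSum_ite_le_mertensSum w (by linarith)).sub hs₁).norm_le_of_bounded
    ((hs₂.sub hs₁).mul_left 3) fun p => ?_
  have hp : (0 : ℝ) < p := by exact_mod_cast p.2.pos
  set t := log p / log x with ht
  have ht0 : 0 ≤ t := div_nonneg (log_natCast_nonneg _) hL.le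
  have hle : (p : ℝ) ≤ x ↔ t ≤ 1 := by
    rw [ht, div_le_one hL, log_le_log_iff hp (by linarith)]
  have hpow (c : ℝ) : w p * (p : ℝ) ^ (-(1 + c)) = w p / p * exp (-(log p * c)) := by
    rw [neg_add, rpow_add hp, rpow_neg_one, rpow_def_of_pos hp, mul_neg]
    ring
  calc _ = w p / p * |(if t ≤ 1 then 1 else 0) - exp (-t)| := by
        rw [hpow, norm_eq_abs, ← abs_of_nonneg (div_nonneg (hw p) hp.le), ← abs_mul,
          abs_of_nonneg (div_nonneg (hw p) hp.le)]
        simp only [hle, mul_one_div, ← ht, mul_sub, mul_ite, mul_one, mul_zero]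
    _ ≤ w p / p * (3 * (exp (-(t / 2)) - exp (-t))) :=
        mul_le_mul_of_nonneg_left (abs_indicator_sub_exp_neg_le ht0) (div_nonneg (hw p) hp.le)
    _ = _ := by
        rw [hpow, hpow, ht]
        ring_nf

theorem HasMertensDensity.of_primeDirichletSum (hw : ∀ p, 0 ≤ w p)
    (hsum : ∀ s : ℝ, 1 < s → Summable fun p : Nat.Primes => w p * (p : ℝ) ^ (-s))
    (hlog : (fun s => primeDirichletSum w s + κ * log (s - 1)) =O[𝓝[>] 1] (fun _ => (1 : ℝ))) :
    HasMertensDensity w κ := by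
  set R := fun s => primeDirichletSum w s + κ * log (s - 1) with hR
  have htendsto {c : ℝ} (hc : 0 < c) :
      Tendsto (fun x => 1 + 1 / (c * log x)) atTop (𝓝[>] 1) := by
    refine tendsto_nhdsWithin_iff.mpr ⟨?_, ?_⟩
    · simpa using (tendsto_inv_atTop_zero.comp (tendsto_log_atTop.const_mul_atTop hc)).const_add 1
    · filter_upwards [eventually_gt_atTop 1] with x hx
      have := log_pos hx
      simpa using by positivity
  have hR₁ : (fun x => R (1 + 1 / log x)) =O[atTop] (fun _ => (1 : ℝ)) := by
    simpa only [Function.comp_def, one_mul] using hlog.comp_tendsto (htendsto one_pos)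
  have hR₂ : (fun x => R (1 + 1 / (2 * log x))) =O[atTop] (fun _ => (1 : ℝ)) :=
    hlog.comp_tendsto (htendsto two_pos)
  have hdiff : (fun x => mertensSum w x - primeDirichletSum w (1 + 1 / log x))
      =O[atTop] (fun _ => (1 : ℝ)) := by
    have hbound : (fun x => 3 * (R (1 + 1 / (2 * log x)) - R (1 + 1 / log x) + κ * log 2))
        =O[atTop] (fun _ => (1 : ℝ)) :=
      ((hR₂.sub hR₁).add (isBigO_const_const _ one_ne_zero _)).const_mul_left 3
    refine IsBigO.trans (IsBigO.of_bound 1 ?_) hbound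
    filter_upwards [eventually_gt_atTop 1] with x hx
    have hL := log_pos hx
    rw [one_mul, norm_eq_abs]
    refine (abs_mertensSum_sub_primeDirichletSum_le hw hsum hx).trans
      (le_of_eq_of_le ?_ (le_abs_self _))
    simp only [hR, add_sub_cancel_left, one_div, log_inv, log_mul two_ne_zero hL.ne']
    ring
  refine (hdiff.add hR₁).congr_left fun x => ?_
  simp only [hR, add_sub_cancel_left, one_div, log_inv]
  ring

end Tauberian

theorem hasSum_log_of_hasProd {ι : Type*} {f : ι → ℝ} {a : ℝ} (hf : ∀ i, 0 < f i) (ha : 0 < a)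
    (h : HasProd f a) : HasSum (fun i => log (f i)) (log a) :=
  ((continuousAt_log ha.ne').tendsto.comp h).congr fun _ => log_prod fun i _ => (hf i).ne'

section PowerSeries

variable {c : ℕ → ℝ} {t M : ℝ}

theorem add_mul_pow_le (hc : ∀ k, 0 ≤ c k) (ht0 : 0 ≤ t) (ht : t ≤ 1 / 2) (j k : ℕ) :
    c (k + j) * t ^ k ≤ 2 ^ j * (c (k + j) * (1 / 2) ^ (k + j)) := by
  have hpow : (2 : ℝ) ^ j * (1 / 2) ^ (k + j) = (1 / 2) ^ k := by
    rw [pow_add, mul_left_comm, ← mul_pow, mul_one_div_cancel two_ne_zero, one_pow, mul_one]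
  rw [mul_left_comm, hpow]
  exact mul_le_mul_of_nonneg_left (pow_le_pow_left₀ ht0 ht k) (hc _)

theorem summable_add_mul_pow (hc : ∀ k, 0 ≤ c k) (hsum : Summable fun k => c k * (1 / 2) ^ k)
    (ht0 : 0 ≤ t) (ht : t ≤ 1 / 2) (j : ℕ) : Summable fun k => c (k + j) * t ^ k :=
  (((summable_nat_add_iff j).mpr hsum).mul_left (2 ^ j)).of_nonneg_of_le
    (fun k => mul_nonneg (hc _) (pow_nonneg ht0 k)) (add_mul_pow_le hc ht0 ht j)

theorem tsum_add_mul_pow_le (hc : ∀ k, 0 ≤ c k) (hsum : Summable fun k => c k * (1 / 2) ^ k)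
    (ht0 : 0 ≤ t) (ht : t ≤ 1 / 2) (j : ℕ) :
    ∑' k, c (k + j) * t ^ k ≤ 2 ^ j * ∑' k, c k * (1 / 2) ^ k :=
  calc ∑' k, c (k + j) * t ^ k ≤ ∑' k, 2 ^ j * (c (k + j) * (1 / 2) ^ (k + j)) :=
        (summable_add_mul_pow hc hsum ht0 ht j).tsum_le_tsum (add_mul_pow_le hc ht0 ht j)
          (((summable_nat_add_iff j).mpr hsum).mul_left _)
    _ = 2 ^ j * ∑' k, c (k + j) * (1 / 2) ^ (k + j) := tsum_mul_left
    _ ≤ 2 ^ j * ∑' k, c k * (1 / 2) ^ k :=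
        mul_le_mul_of_nonneg_left (tsum_comp_le_tsum_of_inj hsum
          (fun k => mul_nonneg (hc k) (by positivity)) (add_left_injective j)) (by positivity)

theorem sub_sq_le_log_one_add {u : ℝ} (hu : 0 ≤ u) : u - u ^ 2 ≤ log (1 + u) := by
  have hpos : 0 < 1 + u := by linarith
  calc u - u ^ 2 ≤ u / (1 + u) := by
        rw [le_div_iff₀ hpos]
        nlinarith [pow_nonneg hu 3]
    _ = 1 - (1 + u)⁻¹ := by field_simp; ring
    _ ≤ log (1 + u) := one_sub_inv_le_log_of_pos hpos

theorem one_le_tsum_mul_pow (h0 : c 0 = 1) (hc : ∀ k, 0 ≤ c k)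
    (hsum : Summable fun k => c k * (1 / 2) ^ k) (ht0 : 0 ≤ t) (ht : t ≤ 1 / 2) :
    1 ≤ ∑' k, c k * t ^ k := by
  simpa only [add_zero, h0, pow_zero, mul_one] using
    (summable_add_mul_pow hc hsum ht0 ht 0).le_tsum 0
      fun k _ => mul_nonneg (hc k) (pow_nonneg ht0 k)

theorem abs_log_tsum_mul_pow_sub_le (h0 : c 0 = 1) (hc : ∀ k, 0 ≤ c k)
    (hsum : Summable fun k => c k * (1 / 2) ^ k) (hM : ∑' k, c k * (1 / 2) ^ k ≤ M)
    (ht0 : 0 ≤ t) (ht : t ≤ 1 / 2) :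
    |log (∑' k, c k * t ^ k) - c 1 * t| ≤ (4 * M + 4 * M ^ 2) * t ^ 2 := by
  have htail_le := tsum_add_mul_pow_le hc hsum ht0 ht
  have htail_nonneg (j : ℕ) : 0 ≤ ∑' k, c (k + j) * t ^ k :=
    tsum_nonneg fun k => mul_nonneg (hc _) (pow_nonneg ht0 k)
  have htail_succ (j : ℕ) : ∑' k, c (k + j) * t ^ k = c j + t * ∑' k, c (k + (j + 1)) * t ^ k := by
    rw [(summable_add_mul_pow hc hsum ht0 ht j).tsum_eq_zero_add, zero_add, pow_zero, mul_one,
      ← tsum_mul_left]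
    congr 1
    exact tsum_congr fun k => by rw [add_right_comm, add_assoc, pow_succ]; ring
  set T₁ := ∑' k, c (k + 1) * t ^ k
  set T₂ := ∑' k, c (k + 2) * t ^ k
  have hS : ∑' k, c k * t ^ k = 1 + t * T₁ := by simpa only [add_zero, h0] using htail_succ 0
  have hT₁ : T₁ = c 1 + t * T₂ := htail_succ 1
  have hT₁_nonneg : 0 ≤ T₁ := htail_nonneg 1
  have hT₁_le : T₁ ≤ 2 * M := by linarith [htail_le 1]
  have hT₂_le : T₂ ≤ 4 * M := by linarith [htail_le 2]
  have hT₂_nonneg : 0 ≤ T₂ := htail_nonneg 2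
  have hupper : log (1 + t * T₁) ≤ t * T₁ := by
    linarith [log_le_sub_one_of_pos (by positivity : 0 < 1 + t * T₁)]
  have hlower := sub_sq_le_log_one_add (mul_nonneg ht0 hT₁_nonneg)
  have hlin : t * T₁ - c 1 * t = T₂ * t ^ 2 := by rw [hT₁]; ring
  have hT₁_sq : T₁ ^ 2 ≤ 4 * M ^ 2 := by nlinarith
  rw [hS, abs_le]
  constructor <;> nlinarith [sq_nonneg t]

end PowerSeries

section EulerProduct

variable {a B : ℕ → ℝ} {s : ℝ}

theorem rpow_neg_le_half_of_prime {p : ℕ} (hp : p.Prime) (hs : 1 < s) : (p : ℝ) ^ (-s) ≤ 1 / 2 := by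
  have hp₂ : (2 : ℝ) ≤ p := by exact_mod_cast hp.two_le
  calc (p : ℝ) ^ (-s) ≤ (p : ℝ) ^ (-1 : ℝ) :=
        rpow_le_rpow_of_exponent_le (by linarith) (by linarith)
    _ ≤ 1 / 2 := by
        rw [rpow_neg_one, one_div]
        exact inv_anti₀ two_pos hp₂

theorem hasProd_tsum_primePow_mul_rpow (ha₁ : a 1 = 1)
    (hmul : ∀ {m n : ℕ}, m.Coprime n → a (m * n) = a m * a n) (hs : 1 < s)
    (hsum : Summable fun n : ℕ => a n * (n : ℝ) ^ (-s)) :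
    HasProd (fun p : Nat.Primes => ∑' k : ℕ, a (p ^ k) * ((p : ℝ) ^ (-s)) ^ k)
      (∑' n : ℕ, a n * (n : ℝ) ^ (-s)) := by
  have hpow (p k : ℕ) : ((p : ℝ) ^ (-s)) ^ k = ((p ^ k : ℕ) : ℝ) ^ (-s) := by
    rw [Nat.cast_pow, rpow_pow_comm p.cast_nonneg]
  simp only [hpow]
  refine EulerProduct.eulerProduct_hasProd (f := fun n : ℕ => a n * (n : ℝ) ^ (-s))
    (by simp [ha₁]) (fun {m n} h => ?_) hsum.norm (by simp [zero_rpow (by linarith : -s ≠ 0)])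
  rw [hmul h, Nat.cast_mul, mul_rpow m.cast_nonneg n.cast_nonneg, mul_mul_mul_comm]

theorem abs_log_tsum_sub_primeDirichletSum_le (ha₁ : a 1 = 1)
    (hmul : ∀ {m n : ℕ}, m.Coprime n → a (m * n) = a m * a n) (ha : ∀ n, 0 ≤ a n)
    (haB : ∀ p k : ℕ, p.Prime → a (p ^ k) ≤ B k) (hB : Summable fun k => B k * (1 / 2) ^ k)
    (hs : 1 < s) (hsum : Summable fun n : ℕ => a n * (n : ℝ) ^ (-s)) :
    |log (∑' n : ℕ, a n * (n : ℝ) ^ (-s)) - primeDirichletSum a s| ≤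
      (4 * (∑' k, B k * (1 / 2) ^ k) + 4 * (∑' k, B k * (1 / 2) ^ k) ^ 2) *
        ∑' p : Nat.Primes, (p : ℝ) ^ (-2 : ℝ) := by
  set M := ∑' k, B k * (1 / 2) ^ k
  have hle (p k : ℕ) (hp : p.Prime) : a (p ^ k) * (1 / 2) ^ k ≤ B k * (1 / 2) ^ k :=
    mul_le_mul_of_nonneg_right (haB p k hp) (by positivity)
  have hlocal (p : ℕ) (hp : p.Prime) : Summable fun k => a (p ^ k) * (1 / 2) ^ k :=
    hB.of_nonneg_of_le (fun k => mul_nonneg (ha _) (by positivity)) fun k => hle p k hp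
  have hlocal_le (p : ℕ) (hp : p.Prime) : ∑' k, a (p ^ k) * (1 / 2) ^ k ≤ M :=
    (hlocal p hp).tsum_le_tsum (fun k => hle p k hp) hB
  have ha₀ (p : ℕ) : a (p ^ 0) = 1 := by rw [pow_zero, ha₁]
  have hnonneg (p : ℕ) : 0 ≤ (p : ℝ) ^ (-s) := rpow_nonneg p.cast_nonneg _
  have hfactor_pos (p : Nat.Primes) : 0 < ∑' k : ℕ, a (p ^ k) * ((p : ℝ) ^ (-s)) ^ k :=
    zero_lt_one.trans_le (one_le_tsum_mul_pow (ha₀ p) (fun k => ha _) (hlocal p p.2)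
      (hnonneg p) (rpow_neg_le_half_of_prime p.2 hs))
  have hpos : 0 < ∑' n : ℕ, a n * (n : ℝ) ^ (-s) :=
    hsum.tsum_pos (fun n => mul_nonneg (ha n) (hnonneg n)) 1 (by simp [ha₁])
  have hlog := hasSum_log_of_hasProd hfactor_pos hpos
    (hasProd_tsum_primePow_mul_rpow ha₁ hmul hs hsum)
  have hprime := (hsum.comp_injective (Subtype.val_injective (p := Nat.Prime))).hasSum
  have hsq : Summable fun p : Nat.Primes => (p : ℝ) ^ (-2 : ℝ) :=
    Nat.Primes.summable_rpow.mpr (by norm_num)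
  refine (hlog.sub hprime).norm_le_of_bounded (hsq.hasSum.mul_left _) fun p => ?_
  have hM : 0 ≤ M := (tsum_nonneg fun k => mul_nonneg (ha _) (by positivity)).trans
    (hlocal_le p p.2)
  have hlog_factor := abs_log_tsum_mul_pow_sub_le (ha₀ p) (fun k => ha _) (hlocal p p.2)
    (hlocal_le p p.2) (hnonneg p) (rpow_neg_le_half_of_prime p.2 hs)
  rw [pow_one] at hlog_factor
  refine hlog_factor.trans (mul_le_mul_of_nonneg_left ?_ (by positivity))
  rw [← rpow_natCast, ← rpow_mul (Nat.cast_nonneg _)]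
  exact rpow_le_rpow_of_exponent_le (by exact_mod_cast p.2.one_lt.le) (by push_cast; linarith)

end EulerProduct

section Pole

variable {a B : ℕ → ℝ} {κ r : ℝ}

theorem summable_mul_rpow_neg_of_le (ha : ∀ n, 0 ≤ a n) {s t : ℝ} (hs : 0 < s) (hst : s ≤ t)
    (hsum : Summable fun n : ℕ => a n * (n : ℝ) ^ (-s)) :
    Summable fun n : ℕ => a n * (n : ℝ) ^ (-t) := by
  refine hsum.of_nonneg_of_le (fun n => mul_nonneg (ha n) (rpow_nonneg n.cast_nonneg _))
    fun n => mul_le_mul_of_nonneg_left ?_ (ha n)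
  rcases n.eq_zero_or_pos with rfl | hn
  · rw [Nat.cast_zero, zero_rpow (by linarith), zero_rpow (by linarith)]
  · exact rpow_le_rpow_of_exponent_le (by exact_mod_cast hn) (by linarith)

theorem summable_mul_rpow_neg_of_tendsto (ha : ∀ n, 0 ≤ a n) (hr : r ≠ 0)
    (hlim : Tendsto (fun s => (s - 1) ^ κ * ∑' n : ℕ, a n * (n : ℝ) ^ (-s)) (𝓝[>] 1) (𝓝 r))
    {s : ℝ} (hs : 1 < s) : Summable fun n : ℕ => a n * (n : ℝ) ^ (-s) := by
  obtain ⟨t, ht, ht₁, hts⟩ :=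
    ((hlim.eventually_ne hr).and (Ioo_mem_nhdsGT hs)).exists
  refine summable_mul_rpow_neg_of_le ha (zero_lt_one.trans ht₁) hts.le
    (not_imp_comm.mp tsum_eq_zero_of_not_summable (right_ne_zero_of_mul ht))

theorem HasMertensDensity.of_tendsto (ha₁ : a 1 = 1)
    (hmul : ∀ {m n : ℕ}, m.Coprime n → a (m * n) = a m * a n) (ha : ∀ n, 0 ≤ a n)
    (haB : ∀ p k : ℕ, p.Prime → a (p ^ k) ≤ B k) (hB : Summable fun k => B k * (1 / 2) ^ k)
    (hr : 0 < r)
    (hlim : Tendsto (fun s => (s - 1) ^ κ * ∑' n : ℕ, a n * (n : ℝ) ^ (-s)) (𝓝[>] 1) (𝓝 r)) :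
    HasMertensDensity a κ := by
  have hsum {s : ℝ} (hs : 1 < s) := summable_mul_rpow_neg_of_tendsto ha hr.ne' hlim hs
  refine .of_primeDirichletSum ha (fun s hs => (hsum hs).comp_injective Subtype.val_injective) ?_
  have hpole : (fun s => log ((s - 1) ^ κ * ∑' n : ℕ, a n * (n : ℝ) ^ (-s)))
      =O[𝓝[>] 1] (fun _ => (1 : ℝ)) := (hlim.log hr.ne').isBigO_one ℝ
  have heuler : (fun s => log (∑' n : ℕ, a n * (n : ℝ) ^ (-s)) - primeDirichletSum a s)
      =O[𝓝[>] 1] (fun _ => (1 : ℝ)) :=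
    IsBigO.of_bound _ (eventually_mem_nhdsWithin.mono fun s hs => by
      rw [norm_one, mul_one]
      exact abs_log_tsum_sub_primeDirichletSum_le ha₁ hmul ha haB hB hs (hsum hs))
  refine (hpole.sub heuler).congr' ?_ .rfl
  filter_upwards [hlim.eventually_ne hr.ne', self_mem_nhdsWithin] with s hne hs
  rw [log_mul (left_ne_zero_of_mul hne) (right_ne_zero_of_mul hne), log_rpow (sub_pos.mpr hs)]
  ring

end Pole

/-- The number of ideals of `S` of absolute norm `n`; for `S = 𝓞 K` and `n ≠ 0`, the `n`-th
coefficient of the Dedekind zeta function of `K`. -/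
noncomputable def idealCount (S : Type*) [CommRing S] [IsDedekindDomain S]
    [Module.Free ℤ S] (n : ℕ) : ℕ :=
  Nat.card {I : Ideal S // Ideal.absNorm I = n}

section CoprimeIdeals

variable {S : Type*} [CommRing S] {I J L : Ideal S} {m n : ℕ}

theorem span_natCast_sup_span_natCast_eq_top (h : m.Coprime n) :
    Ideal.span {(m : S)} ⊔ Ideal.span {(n : S)} = ⊤ := by
  rw [← Ideal.isCoprime_iff_sup_eq, Ideal.isCoprime_span_singleton_iff]
  simpa only [map_natCast] using (Nat.isCoprime_iff_coprime.mpr h).map (Int.castRingHom S)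

theorem mul_sup_span_natCast_eq_left (h : m.Coprime n) (hI : (m : S) ∈ I) (hJ : (n : S) ∈ J) :
    I * J ⊔ Ideal.span {(m : S)} = I := by
  have htop : Ideal.span {(m : S)} ⊔ J = ⊤ := top_unique <|
    (span_natCast_sup_span_natCast_eq_top h).ge.trans
      (sup_le_sup_left ((Ideal.span_singleton_le_iff_mem J).mpr hJ) _)
  rw [sup_comm, Ideal.sup_mul_eq_of_coprime_right htop,
    sup_eq_right.mpr ((Ideal.span_singleton_le_iff_mem I).mpr hI)]

theorem sup_span_natCast_mul_sup_span_natCast (h : m.Coprime n) (hL : ((m * n : ℕ) : S) ∈ L) :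
    (L ⊔ Ideal.span {(m : S)}) * (L ⊔ Ideal.span {(n : S)}) = L := by
  have htop := span_natCast_sup_span_natCast_eq_top (S := S) h
  apply le_antisymm
  · rw [Ideal.sup_mul, Ideal.mul_sup, Ideal.mul_sup, Ideal.span_singleton_mul_span_singleton,
      ← Nat.cast_mul]
    exact sup_le (sup_le Ideal.mul_le_left Ideal.mul_le_left)
      (sup_le Ideal.mul_le_right ((Ideal.span_singleton_le_iff_mem L).mpr hL))
  · calc L = L * Ideal.span {(n : S)} ⊔ Ideal.span {(m : S)} * L := by
          rw [mul_comm _ L, ← Ideal.mul_sup, sup_comm, htop, Ideal.mul_top]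
      _ ≤ _ := sup_le (Ideal.mul_mono le_sup_left le_sup_right)
          (Ideal.mul_mono le_sup_right le_sup_left)

end CoprimeIdeals

section IdealCount

variable {S : Type*} [CommRing S] [IsDedekindDomain S] [Module.Free ℤ S]

theorem idealCount_one : idealCount S 1 = 1 := by
  simp only [idealCount, Ideal.absNorm_eq_one_iff, Nat.card_unique]

open UniqueFactorizationMonoid

variable {p k : ℕ}

theorem ne_zero_of_absNorm_eq_prime_pow (hp : p.Prime) {I : Ideal S}
    (hI : Ideal.absNorm I = p ^ k) : I ≠ 0 := by
  rintro rfl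
  exact pow_ne_zero k hp.ne_zero (hI.symm.trans Ideal.absNorm_bot)

theorem card_normalizedFactors_le_of_absNorm_eq_prime_pow (hp : p.Prime) {I : Ideal S}
    (hI : Ideal.absNorm I = p ^ k) : (normalizedFactors I).card ≤ k := by
  have hprod : ((normalizedFactors I).map Ideal.absNorm).prod = p ^ k := by
    rw [Multiset.prod_hom, Ideal.prod_normalizedFactors_eq_self
      (ne_zero_of_absNorm_eq_prime_pow hp hI), hI]
  have hle : ∀ P ∈ normalizedFactors I, p ≤ Ideal.absNorm P := fun P hP => by
    have hone : Ideal.absNorm P ≠ 1 := fun h => (prime_of_normalized_factor P hP).not_isUnit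
      (Ideal.isUnit_iff.mpr (Ideal.absNorm_eq_one_iff.mp h))
    obtain ⟨j, -, hj⟩ := (Nat.dvd_prime_pow hp).mp
      (hI ▸ map_dvd Ideal.absNorm (dvd_of_mem_normalizedFactors hP))
    rw [hj] at hone ⊢
    exact Nat.le_self_pow (fun h => hone (by rw [h, pow_zero])) p
  have hpow := Multiset.pow_card_le_prod (s := (normalizedFactors I).map Ideal.absNorm) (a := p)
    (by simpa only [Multiset.mem_map, forall_exists_index, and_imp, forall_apply_eq_imp_iff₂])
  rw [hprod, Multiset.card_map] at hpow
  exact (Nat.pow_le_pow_iff_right hp.one_lt).mp hpow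

variable [Module.Finite ℤ S]

theorem absNorm_sup_span_natCast_coprime (L : Ideal S) {m n : ℕ} (h : m.Coprime n) :
    (Ideal.absNorm (L ⊔ Ideal.span {(m : S)})).Coprime n := by
  have hdvd := Ideal.absNorm_dvd_absNorm_of_le (le_sup_right : _ ≤ L ⊔ Ideal.span {(m : S)})
  rw [Ideal.absNorm_span_natCast] at hdvd
  exact (Nat.Coprime.pow_left _ h).coprime_dvd_left hdvd

theorem absNorm_sup_span_natCast {L : Ideal S} {m n : ℕ} (h : m.Coprime n)
    (hL : Ideal.absNorm L = m * n) : Ideal.absNorm (L ⊔ Ideal.span {(m : S)}) = m := by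
  have hprod : Ideal.absNorm (L ⊔ Ideal.span {(m : S)}) *
      Ideal.absNorm (L ⊔ Ideal.span {(n : S)}) = m * n := by
    rw [← map_mul, sup_span_natCast_mul_sup_span_natCast h (hL ▸ Ideal.absNorm_mem L), hL]
  exact Nat.dvd_antisymm
    ((absNorm_sup_span_natCast_coprime L h).dvd_of_dvd_mul_right (Dvd.intro _ hprod))
    ((absNorm_sup_span_natCast_coprime L h.symm).symm.dvd_of_dvd_mul_right
      (Dvd.intro _ hprod.symm))

theorem idealCount_mul {m n : ℕ} (h : m.Coprime n) :
    idealCount S (m * n) = idealCount S m * idealCount S n := by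
  have hmem {I : Ideal S} {k : ℕ} (hI : Ideal.absNorm I = k) : (k : S) ∈ I :=
    hI ▸ Ideal.absNorm_mem I
  rw [idealCount, idealCount, idealCount, ← Nat.card_prod]
  exact Nat.card_congr
    { toFun L :=
        (⟨L.1 ⊔ Ideal.span {(m : S)}, absNorm_sup_span_natCast h L.2⟩,
          ⟨L.1 ⊔ Ideal.span {(n : S)},
            absNorm_sup_span_natCast h.symm (L.2.trans (mul_comm m n))⟩)
      invFun P := ⟨P.1.1 * P.2.1, by rw [map_mul, P.1.2, P.2.2]⟩
      left_inv L := Subtype.ext (sup_span_natCast_mul_sup_span_natCast h (hmem L.2))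
      right_inv P := Prod.ext
        (Subtype.ext (mul_sup_span_natCast_eq_left h (hmem P.1.2) (hmem P.2.2)))
        (Subtype.ext ((congrArg (· ⊔ _) (mul_comm _ _)).trans
          (mul_sup_span_natCast_eq_left h.symm (hmem P.2.2) (hmem P.1.2)))) }

theorem mem_normalizedFactors_span_of_absNorm_eq_prime_pow (hp : p.Prime) {I P : Ideal S}
    (hI : Ideal.absNorm I = p ^ k) (hP : P ∈ normalizedFactors I) :
    P ∈ normalizedFactors (Ideal.span {(p : S)}) := by
  have hprime := prime_of_normalized_factor P hP
  have hspan : Ideal.span {(p : S)} ≠ 0 :=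
    ne_zero_of_absNorm_eq_prime_pow hp (Ideal.absNorm_span_natCast p)
  have hdvd : I ∣ Ideal.span {(p : S)} ^ k := by
    rw [Ideal.dvd_iff_le, Ideal.span_singleton_pow, Ideal.span_singleton_le_iff_mem]
    exact_mod_cast hI ▸ Ideal.absNorm_mem I
  exact (mem_normalizedFactors_iff' hspan).mpr ⟨hprime.irreducible, normalize_eq P,
    hprime.dvd_of_dvd_pow ((dvd_of_mem_normalizedFactors hP).trans hdvd)⟩

open Classical in
theorem idealCount_prime_pow_le (hp : p.Prime) (k : ℕ) :
    idealCount S (p ^ k) ≤ (k + 1) ^ Module.finrank ℤ S := by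
  set T := (normalizedFactors (Ideal.span {(p : S)})).toFinset
  have hT : T.card ≤ Module.finrank ℤ S := (Multiset.toFinset_card_le _).trans
    (card_normalizedFactors_le_of_absNorm_eq_prime_pow hp (Ideal.absNorm_span_natCast p))
  let multiplicities (I : {I : Ideal S // Ideal.absNorm I = p ^ k}) (P : T) : Fin (k + 1) :=
    ⟨(normalizedFactors I.1).count P.1, Nat.lt_succ_of_le ((Multiset.count_le_card _ _).trans
      (card_normalizedFactors_le_of_absNorm_eq_prime_pow hp I.2))⟩
  have hinj : multiplicities.Injective := fun I J hIJ => by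
    have hcount (I : {I : Ideal S // Ideal.absNorm I = p ^ k}) {P : Ideal S} (hP : P ∉ T) :
        (normalizedFactors I.1).count P = 0 := Multiset.count_eq_zero_of_notMem fun h =>
      hP (Multiset.mem_toFinset.mpr (mem_normalizedFactors_span_of_absNorm_eq_prime_pow hp I.2 h))
    have hfactors : normalizedFactors I.1 = normalizedFactors J.1 := Multiset.ext.mpr fun P => by
      by_cases hP : P ∈ T
      · exact congrArg Fin.val (congrFun hIJ ⟨P, hP⟩)
      · rw [hcount I hP, hcount J hP]
    rw [Subtype.ext_iff,
      ← Ideal.prod_normalizedFactors_eq_self (ne_zero_of_absNorm_eq_prime_pow hp I.2), hfactors,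
      Ideal.prod_normalizedFactors_eq_self (ne_zero_of_absNorm_eq_prime_pow hp J.2)]
  calc idealCount S (p ^ k) ≤ Nat.card (T → Fin (k + 1)) := Nat.card_le_card_of_injective _ hinj
    _ = (k + 1) ^ T.card := by simp
    _ ≤ (k + 1) ^ Module.finrank ℤ S := Nat.pow_le_pow_right k.succ_pos hT

end IdealCount

section DedekindZeta

open NumberField

theorem summable_succ_pow_mul_half_pow (n : ℕ) :
    Summable fun k : ℕ => ((k : ℝ) + 1) ^ n * (1 / 2) ^ k := by
  have h := (summable_nat_add_iff 1).mpr
    (summable_pow_mul_geometric_of_norm_lt_one n (r := (1 / 2 : ℝ)) (by norm_num))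
  refine (h.mul_left 2).congr fun k => ?_
  rw [pow_succ, Nat.cast_succ]
  ring

variable (K : Type*) [Field K] [NumberField K]

theorem dedekindZeta_ofReal {s : ℝ} (hs : s ≠ 0) :
    dedekindZeta K s = ((∑' n : ℕ, (idealCount (𝓞 K) n : ℝ) * (n : ℝ) ^ (-s) : ℝ) : ℂ) := by
  rw [dedekindZeta, LSeries, Complex.ofReal_tsum]
  refine tsum_congr fun n => ?_
  rw [LSeries.term_of_ne_zero' (Complex.ofReal_ne_zero.mpr hs), rpow_neg n.cast_nonneg,
    div_eq_mul_inv, Complex.ofReal_mul, Complex.ofReal_inv, Complex.ofReal_cpow n.cast_nonneg]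
  rfl

theorem hasMertensDensity_idealCount :
    HasMertensDensity (fun n => idealCount (𝓞 K) n) 1 := by
  refine .of_tendsto (B := fun k => ((k : ℝ) + 1) ^ Module.finrank ℤ (𝓞 K))
    (by simp only [idealCount_one, Nat.cast_one]) (fun h => by exact_mod_cast idealCount_mul h)
    (fun n => Nat.cast_nonneg _) (fun p k hp => by exact_mod_cast idealCount_prime_pow_le hp k)
    (summable_succ_pow_mul_half_pow _) (dedekindZeta_residue_pos K) ?_
  have hre := (Complex.continuous_re.tendsto _).comp (tendsto_sub_one_mul_dedekindZeta_nhdsGT K)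
  refine hre.congr' ?_
  filter_upwards [self_mem_nhdsWithin] with s hs
  rw [rpow_one, Function.comp_apply, dedekindZeta_ofReal K (zero_lt_one.trans hs).ne']
  exact_mod_cast Complex.ofReal_re _

end DedekindZeta

section KummerDedekind

open NumberField Polynomial UniqueFactorizationMonoid

theorem mem_primesOver_of_absNorm_eq {S : Type*} [CommRing S] [IsDedekindDomain S]
    [Module.Free ℤ S] {I : Ideal S} {p : ℕ} [Fact p.Prime] (hI : Ideal.absNorm I = p) :
    I ∈ (Ideal.span {(p : ℤ)}).primesOver S := by
  have hprime : I.IsPrime := Ideal.isPrime_of_irreducible_absNorm (hI.symm ▸ (Fact.out : p.Prime))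
  refine ⟨hprime, ⟨(Int.ideal_span_isMaximal_of_prime p).eq_of_le
    (Ideal.IsPrime.under ℤ I).ne_top ?_⟩⟩
  rw [Ideal.span_singleton_le_iff_mem, Ideal.under_def, Ideal.mem_comap, map_natCast]
  exact hI ▸ Ideal.absNorm_mem I

variable {K : Type*} [Field K] {θ : 𝓞 K} {p : ℕ} [Fact p.Prime]

theorem mem_monicFactorsMod_iff {q : (ZMod p)[X]} :
    q ∈ RingOfIntegers.monicFactorsMod θ p ↔
      Irreducible q ∧ q.Monic ∧ q ∣ (minpoly ℤ θ).map (Int.castRingHom (ZMod p)) := by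
  rw [Multiset.mem_toFinset,
    mem_normalizedFactors_iff' ((minpoly.monic θ.isIntegral).map _).ne_zero]
  exact and_congr_right fun hq => and_congr_left fun _ => normalize_eq_self_iff_monic hq.ne_zero

theorem X_sub_C_mem_monicFactorsMod_iff {α : ZMod p} :
    X - C α ∈ RingOfIntegers.monicFactorsMod θ p ↔ aeval α (minpoly ℤ θ) = 0 := by
  rw [mem_monicFactorsMod_iff, dvd_iff_isRoot, IsRoot.def, eval_map]
  exact ⟨fun h => h.2.2, fun h => ⟨irreducible_X_sub_C α, monic_X_sub_C α, h⟩⟩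

variable [NumberField K]

theorem absNorm_eq_pow_natDegree_monicFactorsMod (hp : ¬ p ∣ RingOfIntegers.exponent θ)
    (P : (Ideal.span {(p : ℤ)}).primesOver (𝓞 K)) :
    Ideal.absNorm P.1 =
      p ^ (Ideal.primesOverSpanEquivMonicFactorsMod hp P).1.natDegree := by
  have := P.2.1
  have := P.2.2
  have h := Ideal.inertiaDeg_primesOverSpanEquivMonicFactorsMod_symm_apply' hp
    (Ideal.primesOverSpanEquivMonicFactorsMod hp P).2
  rw [Subtype.coe_eta, Equiv.symm_apply_apply] at h
  rw [← h, Ideal.pow_inertiaDeg]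

theorem idealCount_eq_rhoF_minpoly (hp : ¬ p ∣ RingOfIntegers.exponent θ) :
    idealCount (𝓞 K) p = rhoF (minpoly ℤ θ) p := by
  let e := Ideal.primesOverSpanEquivMonicFactorsMod hp
  let root (α : {α : ZMod p // aeval α (minpoly ℤ θ) = 0}) :
      RingOfIntegers.monicFactorsMod θ p := ⟨X - C α.1, X_sub_C_mem_monicFactorsMod_iff.mpr α.2⟩
  have hnorm (α) : Ideal.absNorm (e.symm (root α)).1 = p := by
    rw [absNorm_eq_pow_natDegree_monicFactorsMod hp, e.apply_symm_apply, natDegree_X_sub_C, pow_one]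
  have hinj : Function.Injective fun α => (⟨(e.symm (root α)).1, hnorm α⟩ :
      {I : Ideal (𝓞 K) // Ideal.absNorm I = p}) := fun α β h => by
    have hroot : root α = root β := e.symm.injective (Subtype.ext (Subtype.mk.inj h))
    exact Subtype.ext (C_injective (sub_right_injective (Subtype.ext_iff.mp hroot)))
  refine (Nat.card_congr (Equiv.ofBijective _ ⟨hinj, fun ⟨I, hI⟩ => ?_⟩)).symm
  set q := e ⟨I, mem_primesOver_of_absNorm_eq hI⟩ with hq
  have hdeg : q.1.natDegree = 1 := (Nat.pow_right_inj (Fact.out : p.Prime).one_lt).mp <| by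
    rw [pow_one, ← absNorm_eq_pow_natDegree_monicFactorsMod hp, hI]
  have hmonic : q.1.Monic := (mem_monicFactorsMod_iff.mp q.2).2.1
  have hlin : q.1 = X - C (-q.1.coeff 0) := by
    rw [C_neg, sub_neg_eq_add]
    exact hmonic.eq_X_add_C hdeg
  have hα := X_sub_C_mem_monicFactorsMod_iff.mp (hlin ▸ q.2)
  have hroot : root ⟨-q.1.coeff 0, hα⟩ = q := Subtype.ext hlin.symm
  have hI' : (e.symm (root ⟨-q.1.coeff 0, hα⟩)).1 = I := by rw [hroot, hq, e.symm_apply_apply]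
  exact ⟨⟨-q.1.coeff 0, hα⟩, Subtype.ext hI'⟩

theorem exponent_ne_zero_of_adjoin_eq_top (hθ : Algebra.adjoin ℚ {(θ : K)} = ⊤) :
    RingOfIntegers.exponent θ ≠ 0 := by
  have hmap : (minpoly ℤ θ).map (algebraMap ℤ ℚ) = minpoly ℚ (θ : K) :=
    (minpoly.isIntegrallyClosed_eq_field_fractions ℚ K θ.isIntegral).symm
  have hderiv : aeval θ (derivative (minpoly ℤ θ)) ≠ 0 := fun h => by
    have hsep : (minpoly ℚ (θ : K)).Separable := Algebra.IsSeparable.isSeparable ℚ _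
    refine hsep.aeval_derivative_ne_zero (minpoly.aeval ℚ (θ : K)) ?_
    rw [← hmap, derivative_map, aeval_map_algebraMap, aeval_algebraMap_apply, h, map_zero]
  have hconductor : conductor ℤ θ ≠ ⊥ := fun h => by
    have hprod := conductor_mul_differentIdeal ℤ ℚ K θ hθ
    rw [h, Ideal.bot_mul, eq_comm, Ideal.span_singleton_eq_bot] at hprod
    exact hderiv hprod
  rw [RingOfIntegers.exponent, Ne, Ideal.absNorm_eq_zero_iff]
  exact Ideal.IsIntegral.comap_ne_bot ℤ hconductor

end KummerDedekind

section Coprime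

open Polynomial

theorem isCoprime_map_iff_resultant_ne_zero {R F : Type*} [CommRing R] [Field F] {g h : R[X]}
    (hg : g.Monic) (hh : h.Monic) (φ : R →+* F) :
    IsCoprime (g.map φ) (h.map φ) ↔ φ (g.resultant h) ≠ 0 := by
  rw [← isUnit_resultant_iff_isCoprime (hg.map φ), hg.natDegree_map, hh.natDegree_map,
    resultant_map_map, isUnit_iff_ne_zero]

theorem isCoprime_map_of_squarefree_mul {R : Type*} (F : Type*) [CommRing R] [IsDomain R]
    [IsIntegrallyClosed R] [Field F] [Algebra R F] [IsFractionRing R F] {g h : R[X]}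
    (hg : g.Monic) (hsf : Squarefree (g * h)) :
    IsCoprime (g.map (algebraMap R F)) (h.map (algebraMap R F)) := by
  rw [isCoprime_iff_aeval_ne_zero_of_isAlgClosed F (AlgebraicClosure F)]
  intro α
  by_contra! hα
  simp only [aeval_map_algebraMap] at hα
  have : Module.IsTorsionFree R (AlgebraicClosure F) := .trans_faithfulSMul R F _
  have hint : IsIntegral R α := ⟨g, hg, hα.1⟩
  exact minpoly.not_isUnit R α (hsf _ (mul_dvd_mul
    (minpoly.isIntegrallyClosed_dvd hint hα.1) (minpoly.isIntegrallyClosed_dvd hint hα.2)))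

end Coprime

section Roots

open Polynomial

variable {f g h : ℤ[X]}

theorem rhoF_one {p : ℕ} (hp : p ≠ 1) : rhoF 1 p = 0 := by
  have : Nontrivial (ZMod p) := ZMod.nontrivial_iff.mpr hp
  simp [rhoF]

theorem rhoF_mul (hg : g.Monic) (hh : h.Monic) {p : ℕ} (hp : p.Prime)
    (hpd : ¬ p ∣ (g.resultant h).natAbs) : rhoF (g * h) p = rhoF g p + rhoF h p := by
  have : Fact p.Prime := ⟨hp⟩
  have hcop : IsCoprime (g.map (algebraMap ℤ (ZMod p))) (h.map (algebraMap ℤ (ZMod p))) := by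
    rwa [isCoprime_map_iff_resultant_ne_zero hg hh, algebraMap_int_eq, eq_intCast, Ne,
      ZMod.intCast_zmod_eq_zero_iff_dvd, Int.natCast_dvd]
  have hdisj : Disjoint (fun α : ZMod p => aeval α g = 0) (fun α : ZMod p => aeval α h = 0) := by
    refine Pi.disjoint_iff.mpr fun α => Prop.disjoint_iff.mpr fun ⟨hgα, hhα⟩ => ?_
    rw [← aeval_map_algebraMap (ZMod p)] at hgα hhα
    obtain ⟨a, b, hab⟩ := hcop
    have hα := congrArg (aeval α) hab
    rw [map_add, map_mul, map_mul, hgα, hhα, mul_zero, mul_zero, add_zero, map_one] at hα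
    exact zero_ne_one hα
  classical
  rw [rhoF, rhoF, rhoF, ← Nat.card_sum]
  refine Nat.card_congr ((Equiv.subtypeEquivRight fun α => ?_).trans (subtypeOrEquiv _ _ hdisj))
  rw [map_mul, mul_eq_zero]

theorem numIrredFactors_one : numIrredFactors 1 = 0 := by
  simp [numIrredFactors]

theorem numIrredFactors_mul (hg : g.Monic) (hh : h.Monic) :
    numIrredFactors (g * h) = numIrredFactors g + numIrredFactors h := by
  rw [numIrredFactors, Polynomial.map_mul, UniqueFactorizationMonoid.normalizedFactors_mul
    (hg.map _).ne_zero (hh.map _).ne_zero, Multiset.card_add, numIrredFactors, numIrredFactors]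

theorem numIrredFactors_of_irreducible (hf : f.Monic) (hirr : Irreducible f) :
    numIrredFactors f = 1 := by
  have hirrQ : Irreducible (f.map (Int.castRingHom ℚ)) :=
    (hf.irreducible_iff_irreducible_map_fraction_map (K := ℚ)).mp hirr
  rw [numIrredFactors, UniqueFactorizationMonoid.normalizedFactors_irreducible hirrQ,
    Multiset.card_singleton]

open NumberField in
theorem exists_ringOfIntegers_minpoly_eq (hf : f.Monic) (hirr : Irreducible f) :
    ∃ (K : Type) (_ : Field K) (_ : NumberField K) (θ : 𝓞 K),
      Algebra.adjoin ℚ {(θ : K)} = ⊤ ∧ minpoly ℤ θ = f := by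
  let fQ := f.map (algebraMap ℤ ℚ)
  have : Fact (Irreducible fQ) := ⟨(hf.irreducible_iff_irreducible_map_fraction_map).mp hirr⟩
  have : NumberField (AdjoinRoot fQ) :=
    { to_charZero := algebraRat.charZero _
      to_finiteDimensional := (AdjoinRoot.powerBasis (hf.map _).ne_zero).finite }
  have hroot : aeval (AdjoinRoot.root fQ) fQ = 0 := AdjoinRoot.aeval_eq fQ ▸ AdjoinRoot.mk_self
  let θ : 𝓞 (AdjoinRoot fQ) :=
    ⟨AdjoinRoot.root fQ, f, hf, by rwa [aeval_map_algebraMap] at hroot⟩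
  refine ⟨AdjoinRoot fQ, inferInstance, this, θ, AdjoinRoot.adjoinRoot_eq_top,
    map_injective _ (algebraMap ℤ ℚ).injective_int ?_⟩
  rw [← minpoly.isIntegrallyClosed_eq_field_fractions ℚ (AdjoinRoot fQ) θ.isIntegral]
  exact (minpoly.eq_of_irreducible_of_monic Fact.out hroot (hf.map _)).symm

theorem hasMertensDensity_rhoF_of_irreducible (hf : f.Monic) (hirr : Irreducible f) :
    HasMertensDensity (fun p => rhoF f p) 1 := by
  obtain ⟨K, _, _, θ, hθ, rfl⟩ := exists_ringOfIntegers_minpoly_eq hf hirr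
  refine (hasMertensDensity_idealCount K).congr_of_not_dvd
    (exponent_ne_zero_of_adjoin_eq_top hθ) fun p hp hpd => ?_
  have : Fact p.Prime := ⟨hp⟩
  rw [idealCount_eq_rhoF_minpoly hpd]

theorem hasMertensDensity_rhoF (hf : f.Monic) (hsf : Squarefree f) :
    HasMertensDensity (fun p => rhoF f p) (numIrredFactors f) := by
  induction hn : f.natDegree using Nat.strong_induction_on generalizing f with | _ n ih
  by_cases hirr : Irreducible f
  · rw [numIrredFactors_of_irreducible hf hirr, Nat.cast_one]
    exact hasMertensDensity_rhoF_of_irreducible hf hirr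
  by_cases hone : f = 1
  · subst hone
    rw [numIrredFactors_one, Nat.cast_zero]
    refine HasMertensDensity.zero.congr_of_not_dvd one_ne_zero fun p hp _ => ?_
    rw [rhoF_one hp.ne_one, Nat.cast_zero]
  rw [hf.irreducible_iff_natDegree'] at hirr
  push Not at hirr
  obtain ⟨g, h, hg, hh, rfl, hdeg⟩ := hirr hone
  rw [hg.natDegree_mul hh] at hn hdeg
  obtain ⟨hpos, hle⟩ := Finset.mem_Ioc.mp hdeg
  have hcop := isCoprime_map_of_squarefree_mul ℚ hg hsf
  have hres : g.resultant h ≠ 0 := fun h0 =>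
    (isCoprime_map_iff_resultant_ne_zero hg hh _).mp hcop (by rw [h0, map_zero])
  rw [numIrredFactors_mul hg hh, Nat.cast_add]
  refine HasMertensDensity.congr_of_not_dvd (Int.natAbs_ne_zero.mpr hres) (fun p hp hpd => ?_)
    ((ih g.natDegree (by lia) hg hsf.of_mul_left rfl).add
      (ih h.natDegree (by lia) hh hsf.of_mul_right rfl))
  rw [rhoF_mul hg hh hp hpd, Nat.cast_add]

end Roots

theorem stmt13 (f : Polynomial ℤ) (hmonic : f.Monic) (hsf : Squarefree f)
    (hdeg : 1 ≤ f.natDegree) :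
    ∃ C : ℝ, 0 ≤ C ∧ ∀ x : ℝ, 3 ≤ x →
      |(∑ p ∈ (Finset.range (⌊x⌋₊ + 1)).filter Nat.Prime, (rhoF f p : ℝ) / (p : ℝ)) -
          (numIrredFactors f : ℝ) * Real.log (Real.log x)| ≤ C := by
  obtain ⟨C, hC⟩ := (hasMertensDensity_rhoF hmonic hsf).exists_bound (a := 3) (by norm_num)
  exact ⟨C, (abs_nonneg _).trans (hC 3 le_rfl), hC⟩
end

section
/- Let f ∈ ℤ[T] be a monic polynomial of degree ≥ 1 and let κ be the number of distinct irreducible factors of f in ℚ[T]. Then there exist an integer r ≥ 1, a constant c > 0, and X₀ such that for all X ≥ X₀, |{m ∈ ℤ : 1 ≤ m ≤ X, f(m) ≠ 0, and Ω(f(m)) ≤ r}| ≥ c · X/(log X)^κ. In particular, there are infinitely many positive integers m such that f(m) has at most r prime factors counted with multiplicity. -/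
/-- For a nonzero integer `n`, `bigOmega n` is the number of prime factors of `|n|`
counted with multiplicity. -/
def bigOmega (n : ℤ) : ℕ := ArithmeticFunction.cardFactors n.natAbs

/-- The number of distinct irreducible factors of `f` viewed in `ℚ[T]`. -/
noncomputable def numDistinctIrredFactors (f : Polynomial ℤ) : ℕ :=
  (UniqueFactorizationMonoid.normalizedFactors (f.map (Int.castRingHom ℚ))).toFinset.card

/-!
Fix `a ≥ 1` with `A = f(a) ≠ 0` and put `Q = A² D!` for a large `D`. Then
`f(a + Q n) = A (1 + D! t)`, so every prime factor of the cofactor exceeds `D`, and only the primes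
`D < p ≤ z` need sieving; each of them removes at most `ρ_f(p)` residue classes modulo `p`, the
number of roots of `f` modulo `p`. The Brun–Hooley lower bound sieve, which truncates
inclusion-exclusion separately on the primes with `z^{1/2^{j+1}} < p ≤ z^{1/2^j}`, leaves
`≫ N ∏ (1 - ρ_f(p)/p)` of the `n < N` when `z` is a small enough power of `N`.

This product is `≫ (log z)^{-κ}`: if `θ` is a root of an irreducible factor `h` of `f`, then for all
but finitely many primes `p` distinct roots of `h` modulo `p` give distinct prime ideals of norm `p`
in `ℚ(θ)`, so the simple pole of the Dedekind zeta function at `1` yields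
`∑_{p ≤ z} ρ_h(p)/p ≤ log log z + O(1)`.

A surviving `1 + D! t` has only prime factors above `z` and is at most a fixed power of `z`, so it
has boundedly many of them.
-/

section ElementarySymmetric

open Finset Multiset

variable {R : Type*}

section CommSemiring

variable [CommSemiring R]

theorem esymm_cons_succ (a : R) (s : Multiset R) (n : ℕ) :
    (a ::ₘ s).esymm (n + 1) = s.esymm (n + 1) + a * s.esymm n := by
  simp [esymm, powersetCard_cons, Multiset.map_map, Multiset.sum_map_mul_left]

@[simp]
theorem esymm_zero_right (s : Multiset R) : s.esymm 0 = 1 := by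
  simp [esymm]

@[simp]
theorem esymm_zero_succ (n : ℕ) : (0 : Multiset R).esymm (n + 1) = 0 := by
  simp [esymm, powersetCard_zero_right]

theorem map_multiset_esymm {S : Type*} [CommSemiring S] (f : R →+* S) (s : Multiset R) (n : ℕ) :
    f (s.esymm n) = (s.map f).esymm n := by
  induction s using Multiset.induction_on generalizing n with
  | empty => cases n <;> simp
  | cons a s ih => cases n <;> simp [esymm_cons_succ, ih]

end CommSemiring

section Ordered

variable [CommSemiring R] [PartialOrder R] [IsOrderedRing R] {s : Multiset R}

theorem esymm_nonneg (hs : ∀ x ∈ s, 0 ≤ x) (n : ℕ) : 0 ≤ s.esymm n := by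
  induction s using Multiset.induction_on generalizing n with
  | empty => cases n <;> simp
  | cons a s ih =>
    rw [Multiset.forall_mem_cons] at hs
    cases n with
    | zero => simp
    | succ n =>
      rw [esymm_cons_succ]
      exact add_nonneg (ih hs.2 _) (mul_nonneg hs.1 (ih hs.2 _))

theorem sum_range_esymm_le_one_add_sum_pow (hs : ∀ x ∈ s, 0 ≤ x) (c : ℕ) :
    ∑ i ∈ range (c + 1), s.esymm i ≤ (1 + s.sum) ^ c := by
  induction s using Multiset.induction_on generalizing c with
  | empty => simp [Finset.sum_range_succ']
  | cons a s ih =>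
    rw [Multiset.forall_mem_cons] at hs
    obtain ⟨ha, hs⟩ := hs
    have hsum : 0 ≤ s.sum := Multiset.sum_nonneg hs
    cases c with
    | zero => simp
    | succ c =>
      calc ∑ i ∈ range (c + 1 + 1), (a ::ₘ s).esymm i
          = ∑ i ∈ range (c + 1 + 1), s.esymm i + a * ∑ i ∈ range (c + 1), s.esymm i := by
            rw [Finset.sum_range_succ', Finset.sum_range_succ' (fun i => s.esymm i)]
            simp only [esymm_cons_succ, Finset.sum_add_distrib, Finset.mul_sum, esymm_zero_right]
            ring
        _ ≤ (1 + s.sum) ^ (c + 1) + a * (1 + s.sum) ^ c := by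
            gcongr
            exacts [ih hs _, ih hs _]
        _ = (1 + s.sum) ^ c * (1 + (a ::ₘ s).sum) := by rw [Multiset.sum_cons]; ring
        _ ≤ (1 + (a ::ₘ s).sum) ^ c * (1 + (a ::ₘ s).sum) := by
            rw [Multiset.sum_cons]
            gcongr
            · exact add_nonneg zero_le_one (add_nonneg ha hsum)
            · exact add_nonneg zero_le_one hsum
            · exact le_add_of_nonneg_left ha
        _ = (1 + (a ::ₘ s).sum) ^ (c + 1) := (pow_succ _ _).symm

theorem pow_mul_esymm_le_exp {s : Multiset ℝ} (hs : ∀ x ∈ s, 0 ≤ x) {y : ℝ} (hy : 0 ≤ y) (n : ℕ) :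
    y ^ n * s.esymm n ≤ Real.exp (y * s.sum) := by
  induction s using Multiset.induction_on generalizing n with
  | empty => cases n <;> simp
  | cons a s ih =>
    rw [Multiset.forall_mem_cons] at hs
    cases n with
    | zero => simpa using mul_nonneg hy (add_nonneg hs.1 (Multiset.sum_nonneg hs.2))
    | succ n =>
      calc y ^ (n + 1) * (a ::ₘ s).esymm (n + 1)
          = y ^ (n + 1) * s.esymm (n + 1) + y * a * (y ^ n * s.esymm n) := by
            rw [esymm_cons_succ]; ring
        _ ≤ Real.exp (y * s.sum) + y * a * Real.exp (y * s.sum) := by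
            gcongr
            exacts [ih hs.2 _, mul_nonneg hy hs.1, ih hs.2 _]
        _ = (y * a + 1) * Real.exp (y * s.sum) := by ring
        _ ≤ Real.exp (y * a) * Real.exp (y * s.sum) := by
            gcongr
            exact Real.add_one_le_exp _
        _ = Real.exp (y * (a ::ₘ s).sum) := by rw [Multiset.sum_cons, mul_add, Real.exp_add]

end Ordered

section Bonferroni

/-- The inclusion-exclusion expansion of `∏ x ∈ s, (1 - x)`, truncated to its first `c` levels. -/
def bonferroniSum [CommRing R] (s : Multiset R) (c : ℕ) : R :=
  ∑ i ∈ range c, (-1) ^ i * s.esymm i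

theorem bonferroniSum_cons_succ [CommRing R] (a : R) (s : Multiset R) (c : ℕ) :
    bonferroniSum (a ::ₘ s) (c + 1) = bonferroniSum s (c + 1) - a * bonferroniSum s c := by
  simp only [bonferroniSum, Finset.sum_range_succ', esymm_cons_succ, esymm_zero_right, mul_add,
    Finset.sum_add_distrib, Finset.mul_sum, add_sub_right_comm, add_left_inj]
  rw [sub_eq_add_neg, ← Finset.sum_neg_distrib]
  congr 1
  exact Finset.sum_congr rfl fun i _ => by ring

theorem map_bonferroniSum [CommRing R] {S : Type*} [CommRing S] (f : R →+* S) (s : Multiset R)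
    (c : ℕ) : f (bonferroniSum s c) = bonferroniSum (s.map f) c := by
  simp [bonferroniSum, map_sum, map_multiset_esymm]

variable [CommRing R] [PartialOrder R] [IsOrderedRing R] {s : Multiset R}

theorem neg_one_pow_mul_prod_one_sub_sub_bonferroniSum_mem_Icc
    (hs : ∀ x ∈ s, x ∈ Set.Icc (0 : R) 1) (c : ℕ) :
    (-1) ^ c * ((s.map fun x => 1 - x).prod - bonferroniSum s c) ∈ Set.Icc 0 (s.esymm c) := by
  induction s using Multiset.induction_on generalizing c with
  | empty => cases c <;> simp [bonferroniSum, Finset.sum_range_succ']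
  | cons a s ih =>
    rw [Multiset.forall_mem_cons] at hs
    obtain ⟨⟨ha0, ha1⟩, hs⟩ := hs
    rw [Multiset.map_cons, Multiset.prod_cons]
    cases c with
    | zero =>
      have h := ih hs 0
      simp only [bonferroniSum, pow_zero, one_mul, Finset.range_zero, Finset.sum_empty, sub_zero,
        esymm_zero_right] at h ⊢
      exact ⟨mul_nonneg (sub_nonneg.2 ha1) h.1,
        mul_le_one₀ (sub_le_self _ ha0) h.1 h.2⟩
    | succ c =>
      have hrec : (-1) ^ (c + 1) * ((1 - a) * (s.map fun x => 1 - x).prod -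
          bonferroniSum (a ::ₘ s) (c + 1)) =
          (-1) ^ (c + 1) * ((s.map fun x => 1 - x).prod - bonferroniSum s (c + 1)) +
            a * ((-1) ^ c * ((s.map fun x => 1 - x).prod - bonferroniSum s c)) := by
        rw [bonferroniSum_cons_succ]; ring
      rw [hrec, esymm_cons_succ]
      exact ⟨add_nonneg (ih hs _).1 (mul_nonneg ha0 (ih hs _).1),
        add_le_add (ih hs _).2 (mul_le_mul_of_nonneg_left (ih hs _).2 ha0)⟩

theorem prod_one_sub_le_bonferroniSum (hs : ∀ x ∈ s, x ∈ Set.Icc (0 : R) 1) {c : ℕ} (hc : Odd c) :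
    (s.map fun x => 1 - x).prod ≤ bonferroniSum s c := by
  have h := (neg_one_pow_mul_prod_one_sub_sub_bonferroniSum_mem_Icc hs c).1
  rwa [hc.neg_one_pow, neg_one_mul, neg_sub, sub_nonneg] at h

theorem bonferroniSum_sub_esymm_le_prod_one_sub (hs : ∀ x ∈ s, x ∈ Set.Icc (0 : R) 1) {c : ℕ}
    (hc : Odd c) : bonferroniSum s c - s.esymm c ≤ (s.map fun x => 1 - x).prod := by
  have h := (neg_one_pow_mul_prod_one_sub_sub_bonferroniSum_mem_Icc hs c).2
  rw [hc.neg_one_pow, neg_one_mul, neg_sub] at h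
  exact sub_le_comm.1 h

end Bonferroni

theorem prod_sub_sum_le_prod {ι : Type*} [DecidableEq ι] [CommRing R] [PartialOrder R]
    [IsOrderedRing R] {s : Finset ι} {x y : ι → R} (hx : ∀ i ∈ s, 0 ≤ x i)
    (hxy : ∀ i ∈ s, x i ≤ y i) :
    ∏ i ∈ s, y i - ∑ l ∈ s, (y l - x l) * ∏ i ∈ s.erase l, y i ≤ ∏ i ∈ s, x i := by
  induction s using Finset.induction_on with
  | empty => simp
  | insert a s ha ih =>
    rw [Finset.forall_mem_insert] at hx hxy
    have herase : ∀ l ∈ s, ∏ i ∈ (insert a s).erase l, y i = y a * ∏ i ∈ s.erase l, y i := by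
      intro l hl
      rw [Finset.erase_insert_of_ne (ne_of_mem_of_not_mem hl ha).symm,
        Finset.prod_insert fun h => ha (Finset.mem_of_mem_erase h)]
    have hsum : 0 ≤ ∑ l ∈ s, (y l - x l) * ∏ i ∈ s.erase l, y i :=
      Finset.sum_nonneg fun l hl => mul_nonneg (sub_nonneg.2 (hxy.2 l hl)) <|
        Finset.prod_nonneg fun i hi =>
          (hx.2 i (Finset.mem_of_mem_erase hi)).trans (hxy.2 i (Finset.mem_of_mem_erase hi))
    calc ∏ i ∈ insert a s, y i -
          ∑ l ∈ insert a s, (y l - x l) * ∏ i ∈ (insert a s).erase l, y i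
        = x a * (∏ i ∈ s, y i - ∑ l ∈ s, (y l - x l) * ∏ i ∈ s.erase l, y i) -
            (y a - x a) * ∑ l ∈ s, (y l - x l) * ∏ i ∈ s.erase l, y i := by
          rw [Finset.prod_insert ha, Finset.sum_insert ha, Finset.erase_insert ha,
            Finset.sum_congr rfl fun l hl => by rw [herase l hl, mul_left_comm], ← Finset.mul_sum]
          ring
      _ ≤ x a * (∏ i ∈ s, y i - ∑ l ∈ s, (y l - x l) * ∏ i ∈ s.erase l, y i) :=
          sub_le_self _ (mul_nonneg (sub_nonneg.2 hxy.1) hsum)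
      _ ≤ x a * ∏ i ∈ s, x i := mul_le_mul_of_nonneg_left (ih hx.2 hxy.2) hx.1
      _ = ∏ i ∈ insert a s, x i := (Finset.prod_insert ha).symm

end ElementarySymmetric

section Majorants

open MvPolynomial Finset

variable {σ : Type*}

/-- Cauchy's majorant relation: every coefficient of `Q` bounds the absolute value of the
corresponding coefficient of `P`. It carries error terms through polynomial identities. -/
def Majorizes (Q P : MvPolynomial σ ℝ) : Prop :=
  ∀ m, |P.coeff m| ≤ Q.coeff m

namespace Majorizes

variable {P P' Q Q' : MvPolynomial σ ℝ}

theorem coeff_nonneg (h : Majorizes Q P) (m : σ →₀ ℕ) : 0 ≤ Q.coeff m :=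
  (abs_nonneg _).trans (h m)

theorem zero : Majorizes (0 : MvPolynomial σ ℝ) 0 := fun m => by simp

theorem one : Majorizes (1 : MvPolynomial σ ℝ) 1 := fun m => by
  classical rw [coeff_one]; split_ifs <;> simp

theorem X (i : σ) : Majorizes (X i) (X i) := fun m => by
  classical rw [coeff_X]; split_ifs <;> simp

theorem add (h : Majorizes Q P) (h' : Majorizes Q' P') : Majorizes (Q + Q') (P + P') := fun m => by
  rw [coeff_add, coeff_add]
  exact (abs_add_le _ _).trans (add_le_add (h m) (h' m))

theorem neg (h : Majorizes Q P) : Majorizes Q (-P) := fun m => by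
  rw [coeff_neg, abs_neg]
  exact h m

theorem sub (h : Majorizes Q P) (h' : Majorizes Q' P') : Majorizes (Q + Q') (P - P') := by
  rw [sub_eq_add_neg]
  exact h.add h'.neg

theorem mul (h : Majorizes Q P) (h' : Majorizes Q' P') : Majorizes (Q * Q') (P * P') := fun m => by
  classical
  rw [coeff_mul, coeff_mul]
  refine (abs_sum_le_sum_abs _ _).trans (sum_le_sum fun x _ => ?_)
  rw [abs_mul]
  exact mul_le_mul (h _) (h' _) (abs_nonneg _) (h.coeff_nonneg _)

theorem add_left (h : Majorizes Q P) (h' : Majorizes Q' P') : Majorizes (Q' + Q) P := fun m => by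
  rw [coeff_add]
  exact (h m).trans (le_add_of_nonneg_left (h'.coeff_nonneg m))

theorem sum {ι : Type*} {s : Finset ι} {P Q : ι → MvPolynomial σ ℝ}
    (h : ∀ i ∈ s, Majorizes (Q i) (P i)) : Majorizes (∑ i ∈ s, Q i) (∑ i ∈ s, P i) := fun m => by
  rw [coeff_sum, coeff_sum]
  exact (abs_sum_le_sum_abs _ _).trans (sum_le_sum fun i hi => h i hi m)

theorem prod {ι : Type*} {s : Finset ι} {P Q : ι → MvPolynomial σ ℝ}
    (h : ∀ i ∈ s, Majorizes (Q i) (P i)) : Majorizes (∏ i ∈ s, Q i) (∏ i ∈ s, P i) := by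
  classical
  induction s using Finset.induction_on with
  | empty => simpa using one
  | insert a s ha ih =>
    rw [Finset.forall_mem_insert] at h
    rw [prod_insert ha, prod_insert ha]
    exact h.1.mul (ih h.2)

theorem esymm_map_X (s : Multiset σ) (n : ℕ) :
    Majorizes ((s.map MvPolynomial.X).esymm n) ((s.map MvPolynomial.X).esymm n) := by
  induction s using Multiset.induction_on generalizing n with
  | empty =>
    cases n with
    | zero => simpa using one
    | succ n => simpa using zero
  | cons i s ih =>
    cases n with
    | zero => simpa using one
    | succ n =>
      rw [Multiset.map_cons, esymm_cons_succ]
      exact (ih _).add ((X i).mul (ih n))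

theorem bonferroniSum_map_X (s : Multiset σ) (c : ℕ) :
    Majorizes (∑ i ∈ range c, (s.map MvPolynomial.X).esymm i)
      (bonferroniSum (s.map MvPolynomial.X) c) := by
  refine sum fun i _ => ?_
  rcases neg_one_pow_eq_or (MvPolynomial σ ℝ) i with h | h <;> rw [h]
  · simpa using esymm_map_X s i
  · simpa using (esymm_map_X s i).neg

end Majorizes

theorem prod_pow_eq_prod_of_degrees_le {P : MvPolynomial σ ℝ} {S : Finset σ}
    (hP : P.degrees ≤ S.val) {m : σ →₀ ℕ} (hm : m ∈ P.support) (x : σ → ℝ) :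
    ∏ i ∈ m.support, x i ^ m i = ∏ i ∈ m.support, x i := by
  classical
  refine prod_congr rfl fun i hi => ?_
  have hle : m i ≤ 1 :=
    calc m i ≤ P.degreeOf i := monomial_le_degreeOf i hm
      _ ≤ S.val.count i := degreeOf_def i P ▸ Multiset.count_le_of_le i hP
      _ ≤ 1 := Multiset.nodup_iff_count_le_one.1 S.nodup i
  rw [le_antisymm hle (Nat.one_le_iff_ne_zero.2 (Finsupp.mem_support_iff.1 hi)), pow_one]

theorem eval_eq_sum_of_degrees_le {P : MvPolynomial σ ℝ} {S : Finset σ} (hP : P.degrees ≤ S.val)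
    (x : σ → ℝ) : eval x P = ∑ m ∈ P.support, P.coeff m * ∏ i ∈ m.support, x i := by
  rw [eval_eq]
  exact sum_congr rfl fun m hm => by rw [prod_pow_eq_prod_of_degrees_le hP hm]

theorem Majorizes.sum_abs_coeff_mul_le_eval {P Q : MvPolynomial σ ℝ} (h : Majorizes Q P)
    {r : σ → ℝ} (hr : ∀ i, 0 ≤ r i) :
    ∑ m ∈ P.support, |P.coeff m| * ∏ i ∈ m.support, r i ^ m i ≤ eval r Q := by
  have hprod : ∀ m : σ →₀ ℕ, 0 ≤ ∏ i ∈ m.support, r i ^ m i := fun m =>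
    prod_nonneg fun i _ => pow_nonneg (hr i) _
  have hsub : P.support ⊆ Q.support := fun m hm => mem_support_iff.2 fun hQ =>
    mem_support_iff.1 hm (abs_nonpos_iff.1 (hQ ▸ h m))
  rw [eval_eq]
  exact (sum_le_sum fun m _ => mul_le_mul_of_nonneg_right (h m) (hprod m)).trans
    (sum_le_sum_of_subset_of_nonneg hsub fun m _ _ => mul_nonneg (h.coeff_nonneg m) (hprod m))

theorem support_subset_of_degrees_le {P : MvPolynomial σ ℝ} {S : Finset σ} (hP : P.degrees ≤ S.val)
    {m : σ →₀ ℕ} (hm : m ∈ P.support) : m.support ⊆ S := fun _ hi =>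
  Multiset.mem_of_le hP (mem_degrees.2 ⟨m, mem_support_iff.1 hm, hi⟩)

theorem abs_sum_eval_sub_mul_eval_le {α : Type*} {A : Finset α} {u : α → σ → ℝ} {g r : σ → ℝ}
    {N : ℝ} {S : Finset σ} {P Q : MvPolynomial σ ℝ} (hr : ∀ i, 0 ≤ r i)
    (hu : ∀ T ⊆ S, |∑ n ∈ A, ∏ i ∈ T, u n i - N * ∏ i ∈ T, g i| ≤ ∏ i ∈ T, r i)
    (hP : P.degrees ≤ S.val) (hPQ : Majorizes Q P) :
    |∑ n ∈ A, eval (u n) P - N * eval g P| ≤ eval r Q := by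
  calc |∑ n ∈ A, eval (u n) P - N * eval g P|
      = |∑ m ∈ P.support, P.coeff m *
          (∑ n ∈ A, ∏ i ∈ m.support, u n i - N * ∏ i ∈ m.support, g i)| := by
        simp only [eval_eq_sum_of_degrees_le hP, mul_sub, sum_sub_distrib, mul_sum]
        rw [sum_comm]
        simp only [mul_left_comm N]
    _ ≤ ∑ m ∈ P.support, |P.coeff m| * ∏ i ∈ m.support, r i := by
        refine (abs_sum_le_sum_abs _ _).trans (sum_le_sum fun m hm => ?_)
        rw [abs_mul]
        exact mul_le_mul_of_nonneg_left (hu _ (support_subset_of_degrees_le hP hm)) (abs_nonneg _)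
    _ = ∑ m ∈ P.support, |P.coeff m| * ∏ i ∈ m.support, r i ^ m i :=
        sum_congr rfl fun m hm => by rw [prod_pow_eq_prod_of_degrees_le hP hm]
    _ ≤ eval r Q := hPQ.sum_abs_coeff_mul_le_eval hr

end Majorants

section BrunHooley

open MvPolynomial Finset

variable {ι σ R : Type*} {J : Finset ι} {S : ι → Finset σ} {c : ι → ℕ}

theorem eval_prod_sum_range_esymm_le {r : σ → ℝ} (hr : ∀ i, 0 ≤ r i) :
    eval r (∏ j ∈ J, ∑ i ∈ range (c j + 1), ((S j).val.map X).esymm i) ≤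
      ∏ j ∈ J, (1 + ∑ i ∈ S j, r i) ^ c j := by
  rw [map_prod]
  simp only [map_sum, map_multiset_esymm, Multiset.map_map, Function.comp_def, eval_X]
  have hmem : ∀ j, ∀ x ∈ (S j).val.map r, 0 ≤ x := by simpa using fun j i _ => hr i
  exact prod_le_prod (fun j _ => sum_nonneg fun i _ => esymm_nonneg (hmem j) i)
    fun j _ => sum_range_esymm_le_one_add_sum_pow (hmem j) (c j)

/-- The Brun–Hooley lower bound sieve weight: the Bonferroni sum of depth `c j` is taken in each
block `S j` of variables with `j ∈ J`, and the product over the blocks is corrected by Hooley's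
inequality `prod_sub_sum_le_prod` to make it a lower bound for `∏ j ∈ J, ∏ i ∈ S j, (1 - x i)`. -/
def brunHooleySum [DecidableEq ι] [CommRing R] (J : Finset ι) (S : ι → Finset σ) (c : ι → ℕ)
    (x : σ → R) : R :=
  ∏ j ∈ J, bonferroniSum ((S j).val.map x) (c j) -
    ∑ l ∈ J, ((S l).val.map x).esymm (c l) *
      ∏ j ∈ J.erase l, bonferroniSum ((S j).val.map x) (c j)

variable [DecidableEq ι]

theorem eval_brunHooleySum_X (u : σ → ℝ) :
    eval u (brunHooleySum J S c X) = brunHooleySum J S c u := by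
  simp [brunHooleySum, map_bonferroniSum, map_multiset_esymm, Multiset.map_map]

theorem brunHooleySum_le_prod_one_sub {u : σ → ℝ}
    (hu : ∀ j ∈ J, ∀ i ∈ S j, u i ∈ Set.Icc (0 : ℝ) 1) (hc : ∀ j ∈ J, Odd (c j)) :
    brunHooleySum J S c u ≤ ∏ j ∈ J, ∏ i ∈ S j, (1 - u i) := by
  have hmem : ∀ j ∈ J, ∀ x ∈ (S j).val.map u, x ∈ Set.Icc (0 : ℝ) 1 := by
    simpa only [Multiset.forall_mem_map_iff, mem_val] using hu
  have hnonneg : ∀ j ∈ J, 0 ≤ ∏ i ∈ S j, (1 - u i) := fun j hj =>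
    prod_nonneg fun i hi => sub_nonneg.2 (hu j hj i hi).2
  have hupper : ∀ j ∈ J, ∏ i ∈ S j, (1 - u i) ≤ bonferroniSum ((S j).val.map u) (c j) :=
    fun j hj => by
      simpa [Multiset.map_map] using prod_one_sub_le_bonferroniSum (hmem j hj) (hc j hj)
  have hlower : ∀ l ∈ J, bonferroniSum ((S l).val.map u) (c l) - ∏ i ∈ S l, (1 - u i) ≤
      ((S l).val.map u).esymm (c l) := fun l hl => sub_le_comm.1 <| by
    simpa [Multiset.map_map] using bonferroniSum_sub_esymm_le_prod_one_sub (hmem l hl) (hc l hl)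
  refine le_trans (sub_le_sub_left (sum_le_sum fun l hl => ?_) _)
    (prod_sub_sum_le_prod hnonneg hupper)
  exact mul_le_mul_of_nonneg_right (hlower l hl) <| prod_nonneg fun j hj =>
    (hnonneg j (mem_of_mem_erase hj)).trans (hupper j (mem_of_mem_erase hj))

theorem half_mul_prod_one_sub_le_brunHooleySum {g : σ → ℝ} {δ : ι → ℝ}
    (hg : ∀ j ∈ J, ∀ i ∈ S j, g i ∈ Set.Icc (0 : ℝ) 1) (hc : ∀ j ∈ J, Odd (c j))
    (hδ : ∀ j ∈ J, ((S j).val.map g).esymm (c j) ≤ δ j * ∏ i ∈ S j, (1 - g i))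
    (hδ0 : ∀ j ∈ J, 0 ≤ δ j) (hsum : ∑ j ∈ J, δ j ≤ 1 / 2) :
    1 / 2 * ∏ j ∈ J, ∏ i ∈ S j, (1 - g i) ≤ brunHooleySum J S c g := by
  set y : ι → ℝ := fun j => bonferroniSum ((S j).val.map g) (c j)
  have hx : ∀ j ∈ J, 0 ≤ ∏ i ∈ S j, (1 - g i) := fun j hj =>
    prod_nonneg fun i hi => sub_nonneg.2 (hg j hj i hi).2
  have hxy : ∀ j ∈ J, ∏ i ∈ S j, (1 - g i) ≤ y j := fun j hj => by
    have hmem : ∀ x ∈ (S j).val.map g, x ∈ Set.Icc (0 : ℝ) 1 := by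
      simpa only [Multiset.forall_mem_map_iff, mem_val] using hg j hj
    simpa [Multiset.map_map] using prod_one_sub_le_bonferroniSum hmem (hc j hj)
  have hy : ∀ j ∈ J, 0 ≤ y j := fun j hj => (hx j hj).trans (hxy j hj)
  calc 1 / 2 * ∏ j ∈ J, ∏ i ∈ S j, (1 - g i)
      ≤ 1 / 2 * ∏ j ∈ J, y j := mul_le_mul_of_nonneg_left (prod_le_prod hx hxy) one_half_pos.le
    _ ≤ (1 - ∑ l ∈ J, δ l) * ∏ j ∈ J, y j :=
        mul_le_mul_of_nonneg_right (by linarith) (prod_nonneg hy)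
    _ = ∏ j ∈ J, y j - ∑ l ∈ J, δ l * y l * ∏ j ∈ J.erase l, y j := by
        rw [sub_mul, one_mul, sum_mul]
        congr 1
        exact sum_congr rfl fun l hl => by rw [mul_assoc, mul_prod_erase _ _ hl]
    _ ≤ brunHooleySum J S c g := by
        refine sub_le_sub_left (sum_le_sum fun l hl => mul_le_mul_of_nonneg_right ?_ <|
          prod_nonneg fun j hj => hy j (mem_of_mem_erase hj)) _
        exact (hδ l hl).trans (mul_le_mul_of_nonneg_left (hxy l hl) (hδ0 l hl))

theorem degrees_esymm_map_X_le [CommRing R] (s : Multiset σ) (n : ℕ) :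
    ((s.map (X : σ → MvPolynomial σ R)).esymm n).degrees ≤ s := by
  classical
  induction s using Multiset.induction_on generalizing n with
  | empty => cases n <;> simp
  | cons i s ih =>
    cases n with
    | zero => simp
    | succ n =>
      rw [Multiset.map_cons, esymm_cons_succ]
      refine degrees_add_le.trans (Multiset.union_le ((ih _).trans (Multiset.le_cons_self s i)) ?_)
      rw [← Multiset.singleton_add]
      exact degrees_mul_le.trans (add_le_add (degrees_X' i) (ih n))

theorem degrees_bonferroniSum_map_X_le [CommRing R] (s : Multiset σ) (n : ℕ) :
    (bonferroniSum (s.map (X : σ → MvPolynomial σ R)) n).degrees ≤ s := by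
  classical
  refine (degrees_sum_le _ _).trans (Finset.sup_le fun i _ => ?_)
  rcases neg_one_pow_eq_or (MvPolynomial σ R) i with h | h <;>
    simpa [h] using degrees_esymm_map_X_le s i

theorem degrees_brunHooleySum_X_le [CommRing R] :
    (brunHooleySum J S c (X : σ → MvPolynomial σ R)).degrees ≤ ∑ j ∈ J, (S j).val := by
  classical
  have hprod : ∀ K : Finset ι, (∏ j ∈ K, bonferroniSum ((S j).val.map
      (X : σ → MvPolynomial σ R)) (c j)).degrees ≤ ∑ j ∈ K, (S j).val := fun K =>
    degrees_prod_le.trans (sum_le_sum fun j _ => degrees_bonferroniSum_map_X_le _ _)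
  refine degrees_sub_le.trans (Multiset.union_le (hprod J) ?_)
  refine (degrees_sum_le _ _).trans (Finset.sup_le fun l hl => ?_)
  rw [← add_sum_erase J _ hl]
  exact degrees_mul_le.trans (add_le_add (degrees_esymm_map_X_le _ _) (hprod _))

theorem majorizes_brunHooleySum_X :
    Majorizes
      ((#J + 1 : MvPolynomial σ ℝ) * ∏ j ∈ J, ∑ i ∈ range (c j + 1), ((S j).val.map X).esymm i)
      (brunHooleySum J S c X : MvPolynomial σ ℝ) := by
  set G : ι → MvPolynomial σ ℝ := fun j => ∑ i ∈ range (c j + 1), ((S j).val.map X).esymm i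
  have hbonf : ∀ j, Majorizes (G j) (bonferroniSum ((S j).val.map X) (c j)) := fun j => by
    rw [show G j = _ from sum_range_succ _ _, add_comm]
    exact (Majorizes.bonferroniSum_map_X _ _).add_left (Majorizes.esymm_map_X _ _)
  have hesymm : ∀ j, Majorizes (G j) (((S j).val.map X).esymm (c j)) := fun j => by
    rw [show G j = _ from sum_range_succ _ _]
    exact (Majorizes.esymm_map_X _ _).add_left (Majorizes.bonferroniSum_map_X _ _)
  have hG : (#J + 1) * ∏ j ∈ J, G j = ∏ j ∈ J, G j + ∑ l ∈ J, G l * ∏ j ∈ J.erase l, G j := by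
    rw [sum_congr rfl fun l hl => mul_prod_erase J G hl, sum_const, nsmul_eq_mul]
    ring
  rw [hG]
  exact (Majorizes.prod fun j _ => hbonf j).sub <| Majorizes.sum fun l _ =>
    (hesymm l).mul (Majorizes.prod fun j _ => hbonf j)

theorem exp_neg_add_two_mul_sq_le_one_sub {x : ℝ} (hx : x ∈ Set.Icc (0 : ℝ) (1 / 2)) :
    Real.exp (-(x + 2 * x ^ 2)) ≤ 1 - x := by
  obtain ⟨_, hx1⟩ := hx
  have hpos : 0 < 1 - x := by linarith
  rw [← Real.le_log_iff_exp_le hpos]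
  refine le_trans ?_ (Real.one_sub_inv_le_log_of_pos hpos)
  rw [neg_le_sub_iff_le_add, inv_le_iff_one_le_mul₀ hpos]
  nlinarith [mul_nonneg (sq_nonneg x) (sub_nonneg.2 hx1)]

theorem esymm_le_exp_div_two_pow_mul_prod_one_sub {s : Finset σ} {g : σ → ℝ}
    (hg : ∀ i ∈ s, g i ∈ Set.Icc (0 : ℝ) (1 / 2)) (n : ℕ) :
    (s.val.map g).esymm n ≤ Real.exp (4 * ∑ i ∈ s, g i) / 2 ^ n * ∏ i ∈ s, (1 - g i) := by
  have hesymm : 2 ^ n * (s.val.map g).esymm n ≤ Real.exp (2 * ∑ i ∈ s, g i) :=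
    pow_mul_esymm_le_exp (by simpa using fun i hi => (hg i hi).1) zero_le_two n
  have hprod : Real.exp (-(2 * ∑ i ∈ s, g i)) ≤ ∏ i ∈ s, (1 - g i) := by
    rw [mul_sum, ← sum_neg_distrib, Real.exp_sum]
    exact prod_le_prod (fun _ _ => (Real.exp_pos _).le) fun i hi =>
      le_trans (Real.exp_le_exp.2 (by nlinarith [(hg i hi).1, (hg i hi).2]))
        (exp_neg_add_two_mul_sq_le_one_sub (hg i hi))
  calc (s.val.map g).esymm n
      ≤ Real.exp (2 * ∑ i ∈ s, g i) / 2 ^ n := by rwa [le_div_iff₀' (by positivity)]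
    _ = Real.exp (4 * ∑ i ∈ s, g i) / 2 ^ n * Real.exp (-(2 * ∑ i ∈ s, g i)) := by
        rw [div_mul_eq_mul_div, ← Real.exp_add]; ring_nf
    _ ≤ _ := by gcongr

theorem sum_filter_val_le (J : Finset ι) (P : Finset σ) (b : σ → ι) :
    ∑ j ∈ J, (P.filter (b · = j)).val ≤ P.val := by
  have hdisj : (J : Set ι).PairwiseDisjoint fun j => P.filter (b · = j) :=
    Set.pairwiseDisjoint_filter b J P
  change (J.disjiUnion _ hdisj).val ≤ P.val
  refine val_le_iff.2 fun p hp => ?_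
  obtain ⟨j, -, hp⟩ := mem_disjiUnion.1 hp
  exact mem_of_mem_filter p hp

theorem brunHooley_le_sum_prod_one_sub {α : Type*} {A : Finset α} {u : α → σ → ℝ} {g r : σ → ℝ}
    {N L : ℝ} {P : Finset σ} {b : σ → ι} (hb : ∀ p ∈ P, b p ∈ J) (hc : ∀ j ∈ J, Odd (c j))
    (hN : 0 ≤ N) (hu : ∀ n ∈ A, ∀ p ∈ P, u n p ∈ Set.Icc (0 : ℝ) 1)
    (hg : ∀ p ∈ P, g p ∈ Set.Icc (0 : ℝ) (1 / 2)) (hr : ∀ p, 0 ≤ r p)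
    (hcount : ∀ T ⊆ P, |∑ n ∈ A, ∏ p ∈ T, u n p - N * ∏ p ∈ T, g p| ≤ ∏ p ∈ T, r p)
    (hL : ∀ j ∈ J, ∑ p ∈ P with b p = j, g p ≤ L)
    (hcL : ∑ j ∈ J, Real.exp (4 * L) / 2 ^ c j ≤ 1 / 2) :
    N * (1 / 2 * ∏ p ∈ P, (1 - g p)) -
        (#J + 1) * ∏ j ∈ J, (1 + ∑ p ∈ P with b p = j, r p) ^ c j ≤
      ∑ n ∈ A, ∏ p ∈ P, (1 - u n p) := by
  classical
  set S : ι → Finset σ := fun j => P.filter (b · = j)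
  have hgS : ∀ j ∈ J, ∀ p ∈ S j, g p ∈ Set.Icc (0 : ℝ) (1 / 2) := fun j _ p hp =>
    hg p (mem_of_mem_filter p hp)
  have hmain : 1 / 2 * ∏ p ∈ P, (1 - g p) ≤ brunHooleySum J S c g := by
    rw [← prod_fiberwise_of_maps_to hb]
    refine half_mul_prod_one_sub_le_brunHooleySum (δ := fun j => Real.exp (4 * L) / 2 ^ c j)
      (fun j hj p hp => Set.Icc_subset_Icc_right one_half_lt_one.le (hgS j hj p hp)) hc
      (fun j hj => ?_) (fun j _ => by positivity) hcL
    refine (esymm_le_exp_div_two_pow_mul_prod_one_sub (hgS j hj) _).trans ?_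
    gcongr
    · exact prod_nonneg fun p hp => by linarith [(hgS j hj p hp).2]
    · exact hL j hj
  have herror := (abs_le.1 (abs_sum_eval_sub_mul_eval_le hr hcount
    (degrees_brunHooleySum_X_le.trans (sum_filter_val_le J P b))
    (majorizes_brunHooleySum_X (J := J) (S := S) (c := c)))).1
  have hQ := eval_prod_sum_range_esymm_le (J := J) (S := S) (c := c) hr
  simp only [eval_brunHooleySum_X, map_mul, map_add, map_natCast, map_one] at herror
  calc N * (1 / 2 * ∏ p ∈ P, (1 - g p)) - (#J + 1) * ∏ j ∈ J, (1 + ∑ p ∈ S j, r p) ^ c j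
      ≤ N * brunHooleySum J S c g - (#J + 1) *
          eval r (∏ j ∈ J, ∑ i ∈ range (c j + 1), ((S j).val.map X).esymm i) := by gcongr
    _ ≤ ∑ n ∈ A, brunHooleySum J S c (u n) := by linarith
    _ ≤ ∑ n ∈ A, ∏ p ∈ P, (1 - u n p) := sum_le_sum fun n hn => by
        rw [← prod_fiberwise_of_maps_to hb]
        exact brunHooleySum_le_prod_one_sub
          (fun j _ p hp => hu n hn p (mem_of_mem_filter p hp)) hc

end BrunHooley

section ChineseRemainder

open Finset

theorem abs_card_range_filter_cast_eq_sub_div_le (N q : ℕ) [NeZero q] (w : ZMod q) :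
    |(#{n ∈ range N | ((n : ℕ) : ZMod q) = w} : ℝ) - N / q| ≤ 1 := by
  have hcount : #{n ∈ range N | ((n : ℕ) : ZMod q) = w} =
      N / q + if w.val % q < N % q then 1 else 0 := by
    rw [← Nat.count_modEq_card N (NeZero.pos q) w.val, Nat.count_eq_card_filter_range]
    congr 1
    refine filter_congr fun n _ => ?_
    rw [← ZMod.natCast_eq_natCast_iff, ZMod.natCast_zmod_val]
  have hq : (0 : ℝ) < q := Nat.cast_pos.2 (NeZero.pos q)
  have hlower : ((N / q : ℕ) : ℝ) ≤ N / q := Nat.cast_div_le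
  have hupper : (N : ℝ) / q ≤ (N / q : ℕ) + 1 := by
    rw [div_le_iff₀' hq]
    exact_mod_cast (Nat.lt_mul_div_succ N (NeZero.pos q)).le
  rw [hcount, abs_le]
  split_ifs <;> push_cast <;> constructor <;> linarith

theorem abs_sum_indicator_cast_sub_le (N q : ℕ) [NeZero q] (W : Set (ZMod q)) :
    |∑ n ∈ range N, W.indicator (1 : ZMod q → ℝ) n - N * (W.ncard / q)| ≤ W.ncard := by
  classical
  have hsum : ∑ n ∈ range N, W.indicator (1 : ZMod q → ℝ) n =
      ∑ w ∈ W.toFinset, (#{n ∈ range N | ((n : ℕ) : ZMod q) = w} : ℝ) := by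
    simp_rw [card_filter, Nat.cast_sum]
    rw [sum_comm]
    simp [Set.indicator_apply]
  calc |∑ n ∈ range N, W.indicator (1 : ZMod q → ℝ) n - N * (W.ncard / q)|
      = |∑ w ∈ W.toFinset, ((#{n ∈ range N | ((n : ℕ) : ZMod q) = w} : ℝ) - N / q)| := by
        rw [hsum, sum_sub_distrib, sum_const, nsmul_eq_mul, Set.ncard_eq_toFinset_card']
        ring_nf
    _ ≤ ∑ w ∈ W.toFinset, 1 := (abs_sum_le_sum_abs _ _).trans
        (sum_le_sum fun w _ => abs_card_range_filter_cast_eq_sub_div_le N q w)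
    _ = W.ncard := by rw [sum_const, nsmul_one, Set.ncard_eq_toFinset_card']

theorem abs_sum_prod_indicator_cast_sub_le {ι : Type*} {T : Finset ι} {a : ι → ℕ}
    (ha : ∀ i ∈ T, a i ≠ 0) (hcop : (T : Set ι).Pairwise (Function.onFun Nat.Coprime a))
    (Ω : ∀ i, Set (ZMod (a i))) (N : ℕ) :
    |∑ n ∈ range N, ∏ i ∈ T, (Ω i).indicator (1 : ZMod (a i) → ℝ) n -
      N * ∏ i ∈ T, ((Ω i).ncard / a i : ℝ)| ≤ ∏ i ∈ T, ((Ω i).ncard : ℝ) := by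
  classical
  have : NeZero (∏ i : T, a i) := ⟨prod_ne_zero_iff.2 fun i _ => ha i i.2⟩
  let e := ZMod.prodEquivPi (fun i : T => a i) fun i j hij =>
    hcop i.2 j.2 (Subtype.coe_injective.ne hij)
  set W : Set (ZMod (∏ i : T, a i)) := e ⁻¹' Set.univ.pi fun i : T => Ω i
  have hW : W.ncard = ∏ i ∈ T, (Ω i).ncard := by
    rw [Set.ncard_preimage_of_injective_subset_range e.injective fun x _ => e.surjective x,
      Set.ncard, Set.encard_pi_eq_prod_encard, ENat.toNat_prod, ← prod_coe_sort T]
    rfl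
  have hind : ∀ n : ℕ, W.indicator (1 : ZMod (∏ i : T, a i) → ℝ) n =
      ∏ i ∈ T, (Ω i).indicator (1 : ZMod (a i) → ℝ) n := fun n => by
    rw [← prod_coe_sort T fun i => (Ω i).indicator (1 : ZMod (a i) → ℝ) n]
    simp only [Set.indicator_apply, Pi.one_apply, prod_ite_zero, prod_const_one, mem_univ,
      forall_true_left, W, Set.mem_preimage, map_natCast, Set.mem_univ_pi, Pi.natCast_apply]
  have h := abs_sum_indicator_cast_sub_le N (∏ i : T, a i) W
  simp only [hind, hW] at h
  simpa only [Nat.cast_prod, prod_coe_sort T fun i => (a i : ℝ), ← prod_div_distrib] using h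

end ChineseRemainder

section PrimeSums

open Finset

theorem pow_div_dvd_factorial {p : ℕ} (hp : p.Prime) (n : ℕ) : p ^ (n / p) ∣ n.factorial := by
  rw [hp.pow_dvd_factorial_iff (b := Nat.log p n + 2) (by lia)]
  simpa using single_le_sum (f := fun i => n / p ^ i) (fun _ _ => Nat.zero_le _)
    (mem_Ico.2 ⟨le_rfl, Nat.lt_add_left _ one_lt_two⟩ : 1 ∈ Ico 1 (Nat.log p n + 2))

theorem sum_div_mul_log_le_log_factorial (n : ℕ) :
    ∑ p ∈ n.primesLE, ((n / p : ℕ) : ℝ) * Real.log p ≤ Real.log n.factorial := by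
  have hdvd : ∏ p ∈ n.primesLE, p ^ (n / p) ∣ n.factorial := by
    refine prod_dvd_of_isRelPrime (fun p hp q hq hpq => ?_) fun p hp =>
      pow_div_dvd_factorial (Nat.prime_of_mem_primesLE hp) n
    exact Nat.coprime_iff_isRelPrime.1 <| Nat.coprime_pow_primes _ _
      (Nat.prime_of_mem_primesLE hp) (Nat.prime_of_mem_primesLE hq) hpq
  have hne : ∀ p ∈ n.primesLE, ((p : ℝ) ^ (n / p)) ≠ 0 := fun p hp =>
    pow_ne_zero _ (Nat.cast_ne_zero.2 (Nat.prime_of_mem_primesLE hp).ne_zero)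
  calc ∑ p ∈ n.primesLE, ((n / p : ℕ) : ℝ) * Real.log p
      = Real.log ((∏ p ∈ n.primesLE, p ^ (n / p) : ℕ) : ℝ) := by
        push_cast
        rw [Real.log_prod hne]
        simp only [Real.log_pow]
    _ ≤ Real.log n.factorial := by
        refine Real.log_le_log ?_ (Nat.cast_le.2 (Nat.le_of_dvd n.factorial_pos hdvd))
        exact_mod_cast prod_pos fun p hp => pow_pos (Nat.prime_of_mem_primesLE hp).pos _

theorem sum_log_div_le_two_mul_log (n : ℕ) :
    ∑ p ∈ n.primesLE, Real.log p / p ≤ 2 * Real.log n := by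
  rcases n.eq_zero_or_pos with rfl | hn
  · simp
  have : (0 : ℝ) < n := Nat.cast_pos.2 hn
  have hterm : ∀ p ∈ n.primesLE, n / 2 * (Real.log p / p) ≤ ((n / p : ℕ) : ℝ) * Real.log p := by
    intro p hp
    have hp0 : 0 < p := (Nat.prime_of_mem_primesLE hp).pos
    have hdiv : n < p * (n / p + 1) := Nat.lt_mul_div_succ n hp0
    have hone : 1 ≤ n / p := (Nat.one_le_div_iff hp0).2 (Nat.le_of_mem_primesLE hp)
    have hdiv' : (n : ℝ) ≤ 2 * (n / p : ℕ) * p := by exact_mod_cast (by nlinarith)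
    rw [div_mul_div_comm, mul_div_right_comm]
    refine mul_le_mul_of_nonneg_right ?_ (Real.log_natCast_nonneg p)
    rw [div_le_iff₀ (by positivity)]
    linarith
  have hfact : Real.log n.factorial ≤ n * Real.log n := by
    rw [← Real.log_pow]
    exact Real.log_le_log (by positivity) (by exact_mod_cast n.factorial_le_pow)
  have hsum : n / 2 * ∑ p ∈ n.primesLE, Real.log p / p ≤ n / 2 * (2 * Real.log n) := by
    rw [mul_sum]
    refine (sum_le_sum hterm).trans ((sum_div_mul_log_le_log_factorial n).trans ?_)
    linarith
  exact le_of_mul_le_mul_left hsum (by positivity)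

theorem sum_one_div_le_four {P : Finset ℕ} (hP : ∀ p ∈ P, p.Prime) {z j : ℕ} (hz : 2 ≤ z)
    (hlower : ∀ p ∈ P, p ^ 2 ^ j ≤ z) (hupper : ∀ p ∈ P, z < p ^ 2 ^ (j + 1)) :
    ∑ p ∈ P, (1 : ℝ) / p ≤ 4 := by
  rcases P.eq_empty_or_nonempty with rfl | hne
  · simp
  set q := P.max' hne
  have hlogz : 0 < Real.log z := Real.log_pos (by exact_mod_cast hz)
  have hlogq : 2 ^ j * Real.log q ≤ Real.log z := by
    have h := Real.log_le_log (by have := (hP q (P.max'_mem hne)).pos; positivity)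
      (by exact_mod_cast hlower q (P.max'_mem hne) : (q : ℝ) ^ 2 ^ j ≤ z)
    simpa [Real.log_pow] using h
  have hterm : ∀ p ∈ P, Real.log z / 2 ^ (j + 1) * (1 / p) ≤ Real.log p / p := by
    intro p hp
    have h := Real.log_le_log (by positivity)
      (by exact_mod_cast (hupper p hp).le : (z : ℝ) ≤ (p : ℝ) ^ 2 ^ (j + 1))
    rw [Real.log_pow] at h
    push_cast at h
    rw [mul_one_div]
    refine div_le_div_of_nonneg_right ?_ (Nat.cast_nonneg p)
    rwa [div_le_iff₀' (by positivity)]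
  have hsub : P ⊆ q.primesLE := fun p hp => Nat.mem_primesLE.2 ⟨P.le_max' p hp, hP p hp⟩
  have hsum : Real.log z / 2 ^ (j + 1) * ∑ p ∈ P, (1 : ℝ) / p ≤ Real.log z / 2 ^ (j + 1) * 4 :=
    calc Real.log z / 2 ^ (j + 1) * ∑ p ∈ P, (1 : ℝ) / p
        ≤ ∑ p ∈ P, Real.log p / p := by rw [mul_sum]; exact sum_le_sum hterm
      _ ≤ ∑ p ∈ q.primesLE, Real.log p / p := sum_le_sum_of_subset_of_nonneg hsub
          fun p _ _ => div_nonneg (Real.log_natCast_nonneg p) (Nat.cast_nonneg p)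
      _ ≤ 2 * Real.log q := sum_log_div_le_two_mul_log q
      _ ≤ Real.log z / 2 ^ (j + 1) * 4 := by
          rw [pow_succ, div_mul_eq_mul_div, le_div_iff₀ (by positivity)]
          linarith
  exact le_of_mul_le_mul_left hsum (by positivity)

end PrimeSums

section FundamentalLemma

open Finset

theorem pow_two_pow_log_log_le {p z : ℕ} (hp : 2 ≤ p) (hpz : p ≤ z) :
    p ^ 2 ^ Nat.log 2 (Nat.log p z) ≤ z :=
  (Nat.pow_le_pow_right (by lia) (Nat.pow_log_le_self 2 (Nat.log_pos hp hpz).ne')).trans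
    (Nat.pow_log_le_self p (by lia))

theorem lt_pow_two_pow_log_log_add_one {p : ℕ} (hp : 2 ≤ p) (z : ℕ) :
    z < p ^ 2 ^ (Nat.log 2 (Nat.log p z) + 1) :=
  (Nat.lt_pow_succ_log_self hp z).trans_le
    (Nat.pow_le_pow_right (by lia) (Nat.lt_pow_succ_log_self one_lt_two _))

theorem sum_affine_div_two_pow_le (b M : ℕ) :
    ∑ j ∈ range M, ((2 * (b + j) + 1 : ℕ) : ℝ) / 2 ^ j ≤ (4 * b + 6 : ℕ) := by
  have hsum : ∑ j ∈ range M, ((2 * (b + j) + 1 : ℕ) : ℝ) / 2 ^ j =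
      (4 * b + 6 : ℕ) - (4 * b + 6 + 4 * M : ℕ) / 2 ^ M := by
    induction M with
    | zero => simp
    | succ M ih =>
      rw [sum_range_succ, ih, pow_succ]
      field_simp
      push_cast
      ring
  rw [hsum]
  exact sub_le_self _ (by positivity)

theorem prod_pow_le_pow_of_pow_two_pow_le {M : ℕ} {x : ℕ → ℝ} {y : ℝ} {c : ℕ → ℕ} {e : ℕ}
    (hx : ∀ j ∈ range M, 1 ≤ x j) (hy : 1 ≤ y) (hxy : ∀ j ∈ range M, x j ^ 2 ^ j ≤ y)
    (hc : ∑ j ∈ range M, (c j : ℝ) / 2 ^ j ≤ e) : ∏ j ∈ range M, x j ^ c j ≤ y ^ e := by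
  have hpos : ∀ j ∈ range M, 0 < x j ^ c j := fun j hj =>
    pow_pos (one_pos.trans_le (hx j hj)) _
  rw [← Real.log_le_log_iff (prod_pos hpos) (by positivity), Real.log_prod fun j hj =>
    (hpos j hj).ne', Real.log_pow]
  refine le_trans (sum_le_sum fun j hj => ?_)
    ((sum_mul _ _ _).symm.trans_le (mul_le_mul_of_nonneg_right hc (Real.log_nonneg hy)))
  have hlog := Real.log_le_log (pow_pos (one_pos.trans_le (hx j hj)) _) (hxy j hj)
  rw [Real.log_pow] at hlog
  push_cast at hlog
  rw [Real.log_pow, div_mul_eq_mul_div, mul_div_assoc]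
  exact mul_le_mul_of_nonneg_left ((le_div_iff₀' (by positivity)).2 hlog) (Nat.cast_nonneg _)

theorem one_add_sum_pow_two_pow_le {P : Finset ℕ} {r : ℕ → ℕ} {j z : ℕ} (hz : 1 ≤ z)
    (hP : ∀ p ∈ P, 2 ≤ p) (hr : ∀ p ∈ P, r p ≤ p) (hPz : ∀ p ∈ P, p ^ 2 ^ j ≤ z) :
    (1 + ∑ p ∈ P, r p) ^ 2 ^ j ≤ z ^ 2 := by
  rcases P.eq_empty_or_nonempty with rfl | hne
  · simpa using Nat.one_le_pow 2 z hz
  set q := P.max' hne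
  have hq : 2 ≤ q := hP q (P.max'_mem hne)
  have hcard : #P ≤ q - 1 := by
    rw [← Nat.card_Ioc]
    exact card_le_card fun p hp => mem_Ioc.2 ⟨hP p hp, P.le_max' p hp⟩
  have hsum : 1 + ∑ p ∈ P, r p ≤ q ^ 2 :=
    calc 1 + ∑ p ∈ P, r p ≤ 1 + #P * q :=
          Nat.add_le_add_left (sum_le_card_nsmul _ _ _ fun p hp => (hr p hp).trans
            (P.le_max' p hp)) 1
      _ ≤ 1 + (q - 1) * q := by gcongr
      _ ≤ q ^ 2 := by
          obtain ⟨s, hs⟩ := Nat.exists_eq_add_of_le hq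
          rw [hs, show 2 + s - 1 = s + 1 by lia]
          nlinarith
  calc (1 + ∑ p ∈ P, r p) ^ 2 ^ j ≤ (q ^ 2) ^ 2 ^ j := Nat.pow_le_pow_left hsum _
    _ = (q ^ 2 ^ j) ^ 2 := pow_right_comm _ _ _
    _ ≤ z ^ 2 := Nat.pow_le_pow_left (hPz q (P.max'_mem hne)) 2

theorem sum_filter_log_log_div_le {P : Finset ℕ} {r : ℕ → ℕ} {k z : ℕ} (hz : 2 ≤ z)
    (hP : ∀ p ∈ P, p.Prime ∧ p ≤ z) (hr : ∀ p ∈ P, r p ≤ k) (j : ℕ) :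
    ∑ p ∈ P with Nat.log 2 (Nat.log p z) = j, (r p : ℝ) / p ≤ k * 4 := by
  calc _ ≤ ∑ p ∈ P with Nat.log 2 (Nat.log p z) = j, k * (1 / p : ℝ) := sum_le_sum fun p hp => by
        rw [mul_one_div]
        gcongr
        exact hr p (mem_of_mem_filter p hp)
    _ ≤ k * 4 := by
        rw [← mul_sum]
        gcongr
        refine sum_one_div_le_four (j := j) (fun p hp => (hP p (mem_of_mem_filter p hp)).1) hz ?_ ?_
        all_goals
          intro p hp
          obtain ⟨hpP, rfl⟩ := mem_filter.1 hp
          obtain ⟨hprime, hpz⟩ := hP p hpP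
        · exact pow_two_pow_log_log_le hprime.two_le hpz
        · exact lt_pow_two_pow_log_log_add_one hprime.two_le z

theorem prod_one_add_sum_filter_log_log_pow_le {P : Finset ℕ} {r : ℕ → ℕ} {z : ℕ} (hz : 1 ≤ z)
    (hP : ∀ p ∈ P, 2 ≤ p ∧ p ≤ z) (hr : ∀ p ∈ P, r p ≤ p) (b M : ℕ) :
    ∏ j ∈ range M, (1 + ∑ p ∈ P with Nat.log 2 (Nat.log p z) = j, (r p : ℝ)) ^ (2 * (b + j) + 1) ≤
      ((z : ℝ) ^ 2) ^ (4 * b + 6) := by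
  refine prod_pow_le_pow_of_pow_two_pow_le (fun j _ => ?_) (one_le_pow₀ (by exact_mod_cast hz))
    (fun j _ => ?_) (sum_affine_div_two_pow_le b M)
  · exact le_add_of_nonneg_right (sum_nonneg fun p _ => Nat.cast_nonneg _)
  · refine mod_cast one_add_sum_pow_two_pow_le hz (fun p hp => ?_) (fun p hp => ?_) fun p hp => ?_
    · exact (hP p (mem_of_mem_filter p hp)).1
    · exact hr p (mem_of_mem_filter p hp)
    · obtain ⟨hpP, rfl⟩ := mem_filter.1 hp
      exact pow_two_pow_log_log_le (hP p hpP).1 (hP p hpP).2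

theorem sum_div_two_pow_affine_le {a : ℝ} {b : ℕ} (hab : 2 * a ≤ 4 ^ b) (M : ℕ) :
    ∑ j ∈ range M, a / 2 ^ (2 * (b + j) + 1) ≤ 1 / 2 := by
  rcases le_or_gt a 0 with ha | _
  · exact (sum_nonpos fun j _ => div_nonpos_of_nonpos_of_nonneg ha (by positivity)).trans
      one_half_pos.le
  have hterm : ∀ j ∈ range M, a / 2 ^ (2 * (b + j) + 1) ≤ 1 / 4 * (1 / 2) ^ j := fun j _ => by
    have h4 : (2 : ℝ) ^ j ≤ 4 ^ j := pow_le_pow_left₀ (by norm_num) (by norm_num) j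
    rw [pow_succ, pow_mul, pow_add, show (2 : ℝ) ^ 2 = 4 by norm_num, one_div_pow,
      ← div_eq_mul_one_div, div_div, div_le_div_iff₀ (by positivity) (by positivity)]
    nlinarith [mul_le_mul hab h4 (by positivity) (by positivity)]
  calc _ ≤ 1 / 4 * ∑ j ∈ range M, (1 / 2 : ℝ) ^ j := by rw [mul_sum]; exact sum_le_sum hterm
    _ ≤ 1 / 4 * 2 := by gcongr; exact sum_geometric_two_le M
    _ = 1 / 2 := by norm_num

open Classical in
theorem sum_prod_one_sub_indicator_eq_card {α σ : Type*} {β : σ → Type*} (A : Finset α)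
    (P : Finset σ) (Ω : ∀ p, Set (β p)) (x : α → ∀ p, β p) :
    ∑ n ∈ A, ∏ p ∈ P, (1 - (Ω p).indicator (1 : β p → ℝ) (x n p)) =
      #{n ∈ A | ∀ p ∈ P, x n p ∉ Ω p} := by
  have hterm : ∀ n p, 1 - (Ω p).indicator (1 : β p → ℝ) (x n p) =
      if x n p ∉ Ω p then 1 else 0 := fun n p => by
    by_cases h : x n p ∈ Ω p <;> simp [h]
  rw [card_filter, Nat.cast_sum]
  refine sum_congr rfl fun n _ => ?_
  simp only [hterm, prod_ite_zero, prod_const_one, Nat.cast_ite, Nat.cast_one, Nat.cast_zero]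

theorem natCast_div_mem_Icc_zero_half {a p : ℕ} (h : 2 * a ≤ p) :
    (a : ℝ) / p ∈ Set.Icc (0 : ℝ) (1 / 2) := by
  refine ⟨by positivity, div_le_of_le_mul₀ p.cast_nonneg one_half_pos.le ?_⟩
  have h' : (2 * a : ℝ) ≤ p := mod_cast h
  linarith

open Classical in
theorem exists_half_mul_prod_one_sub_sub_pow_le_card_sifted (k : ℕ) :
    ∃ E : ℕ, ∀ (z N : ℕ) (P : Finset ℕ) (Ω : ∀ p : ℕ, Set (ZMod p)), 2 ≤ z →
      (∀ p ∈ P, p.Prime ∧ p ≤ z ∧ 2 * k ≤ p ∧ (Ω p).ncard ≤ k) →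
      N * (1 / 2 * ∏ p ∈ P, (1 - ((Ω p).ncard : ℝ) / p)) - z ^ E ≤
        #{n ∈ range N | ∀ p ∈ P, ((n : ℕ) : ZMod p) ∉ Ω p} := by
  obtain ⟨b, hb⟩ := pow_unbounded_of_one_lt (2 * Real.exp (4 * (k * 4))) (by norm_num : (1 : ℝ) < 4)
  refine ⟨2 + 2 * (4 * b + 6), fun z N P Ω hz hP => ?_⟩
  have hprime : ∀ p ∈ P, p.Prime := fun p hp => (hP p hp).1
  have hncard : ∀ p ∈ P, 2 * (Ω p).ncard ≤ p := fun p hp => by linarith [(hP p hp).2.2]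
  have hu : ∀ n ∈ range N, ∀ p ∈ P,
      (Ω p).indicator (1 : ZMod p → ℝ) n ∈ Set.Icc (0 : ℝ) 1 := fun n _ p _ =>
    ⟨Set.indicator_nonneg (fun _ _ => zero_le_one) _,
      Set.indicator_le_self' (fun _ _ => zero_le_one) _⟩
  have hcount := fun T (hT : T ⊆ P) => abs_sum_prod_indicator_cast_sub_le (a := fun p => p)
    (fun p hp => (hprime p (hT hp)).ne_zero)
    (fun p hp q hq hpq => (Nat.coprime_primes (hprime p (hT hp)) (hprime q (hT hq))).2 hpq) Ω N
  have hsieve := brunHooley_le_sum_prod_one_sub (J := range z)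
    (b := fun p => Nat.log 2 (Nat.log p z)) (c := fun j => 2 * (b + j) + 1)
    (fun p _ => mem_range.2 ((Nat.log_le_self _ _).trans_lt (Nat.log_lt_self p (by lia))))
    (fun j _ => ⟨b + j, rfl⟩) N.cast_nonneg hu
    (fun p hp => natCast_div_mem_Icc_zero_half (hncard p hp)) (fun p => Nat.cast_nonneg _) hcount
    (fun j _ => sum_filter_log_log_div_le hz (fun p hp => ⟨hprime p hp, (hP p hp).2.1⟩)
      (fun p hp => (hP p hp).2.2.2) j)
    (sum_div_two_pow_affine_le hb.le z)
  rw [sum_prod_one_sub_indicator_eq_card (range N) P Ω fun n p => (n : ZMod p),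
    card_range] at hsieve
  have hz' : (z + 1 : ℝ) ≤ z ^ 2 := by exact_mod_cast (by nlinarith : z + 1 ≤ z ^ 2)
  refine le_trans (sub_le_sub_left ?_ _) hsieve
  rw [pow_add, pow_mul]
  refine mul_le_mul hz' (prod_one_add_sum_filter_log_log_pow_le (by lia)
    (fun p hp => ⟨(hprime p hp).two_le, (hP p hp).2.1⟩) (fun p hp => ?_) b z) ?_ (by positivity)
  · linarith [hncard p hp]
  · exact prod_nonneg fun j _ => pow_nonneg (by positivity) _

end FundamentalLemma

section NumberField

open Finset Polynomial NumberField Filter Topology UniqueFactorizationMonoid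

theorem sum_div_rpow_le_norm_LSeries {a : ℕ → ℕ} {s : ℝ} (ha : LSeriesSummable (fun n => a n) s)
    {F : Finset ℕ} (hF : 0 ∉ F) :
    ∑ n ∈ F, (a n : ℝ) / (n : ℝ) ^ s ≤ ‖LSeries (fun n => (a n : ℂ)) s‖ := by
  have hterm : ∀ n ≠ 0, LSeries.term (fun n => (a n : ℂ)) s n = ((a n / (n : ℝ) ^ s : ℝ) : ℂ) :=
    fun n hn => by
      rw [LSeries.term_of_ne_zero hn, Complex.ofReal_div, Complex.ofReal_cpow n.cast_nonneg]
      rfl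
  calc ∑ n ∈ F, (a n : ℝ) / (n : ℝ) ^ s
      = ∑ n ∈ F, (LSeries.term (fun n => (a n : ℂ)) s n).re := sum_congr rfl fun n hn => by
        rw [hterm n (ne_of_mem_of_not_mem hn hF), Complex.ofReal_re]
    _ ≤ (LSeries (fun n => (a n : ℂ)) s).re := by
        refine sum_le_hasSum F (fun n _ => ?_) (Complex.hasSum_re ha.LSeriesHasSum)
        rcases eq_or_ne n 0 with rfl | hn
        · simp
        · rw [hterm n hn, Complex.ofReal_re]
          positivity
    _ ≤ ‖LSeries (fun n => (a n : ℂ)) s‖ := Complex.re_le_norm _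

theorem prod_injOn_powerset_of_prime {M : Type*} [CommMonoidWithZero M] [Subsingleton Mˣ]
    [UniqueFactorizationMonoid M] {F : Finset M} (hF : ∀ p ∈ F, Prime p) :
    Set.InjOn (fun T : Finset M => ∏ p ∈ T, p) F.powerset := by
  have hfactors : ∀ T ∈ F.powerset, normalizedFactors (∏ p ∈ T, p) = T.val := fun T hT => by
    rw [Finset.prod, Multiset.map_id', normalizedFactors_prod_eq _ fun p hp =>
      (hF p (mem_powerset.1 hT hp)).irreducible]
    simp only [normalize_eq, Multiset.map_id']
  intro T hT T' hT' h
  exact val_injective ((hfactors T hT).symm.trans ((congrArg _ h).trans (hfactors T' hT')))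

variable (K : Type*) [Field K] [NumberField K]

theorem exists_eventually_sum_absNorm_rpow_le :
    ∃ C : ℝ, ∀ᶠ s in 𝓝[>] (1 : ℝ), ∀ T : Finset (Ideal (𝓞 K)), ⊥ ∉ T →
      ∑ I ∈ T, ((Ideal.absNorm I : ℝ) ^ s)⁻¹ ≤ C / (s - 1) := by
  classical
  have hlim := tendsto_sub_one_mul_dedekindZeta_nhdsGT K
  have hres : (dedekindZeta_residue K : ℂ) ≠ 0 :=
    Complex.ofReal_ne_zero.2 (dedekindZeta_residue_pos K).ne'
  refine ⟨‖(dedekindZeta_residue K : ℂ)‖ + 1, ?_⟩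
  filter_upwards [hlim.eventually_ne hres, hlim.norm.eventually_le_const (lt_add_one _),
    self_mem_nhdsWithin] with s hne hle hs T hT
  have hsum : LSeriesSummable (fun n => (Nat.card {I : Ideal (𝓞 K) // I.absNorm = n} : ℂ)) s :=
    not_not.1 fun h => right_ne_zero_of_mul hne (LSeries.eq_zero_of_not_LSeriesSummable _ _ h)
  have hzero : 0 ∉ T.image Ideal.absNorm := fun h => by
    obtain ⟨I, hI, hI0⟩ := mem_image.1 h
    exact hT (Ideal.absNorm_eq_zero_iff.1 hI0 ▸ hI)
  have hnorm : (s - 1) * ‖dedekindZeta K s‖ ≤ ‖(dedekindZeta_residue K : ℂ)‖ + 1 := by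
    rwa [norm_mul, ← Complex.ofReal_one, ← Complex.ofReal_sub, Complex.norm_real,
      Real.norm_of_nonneg (sub_nonneg.2 (le_of_lt hs))] at hle
  rw [le_div_iff₀' (sub_pos.2 hs)]
  refine le_trans (mul_le_mul_of_nonneg_left ?_ (sub_nonneg.2 (le_of_lt hs))) hnorm
  rw [sum_comp (fun n : ℕ => ((n : ℝ) ^ s)⁻¹) Ideal.absNorm]
  refine le_trans (sum_le_sum fun n _ => ?_) (sum_div_rpow_le_norm_LSeries hsum hzero)
  rw [nsmul_eq_mul, ← div_eq_mul_inv]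
  have hfin := Ideal.finite_setOfPred_absNorm_eq (S := 𝓞 K) n
  gcongr
  rw [show Nat.card {I : Ideal (𝓞 K) // I.absNorm = n} = _ from
    Nat.card_eq_card_finite_toFinset hfin]
  exact card_le_card fun I hI => hfin.mem_toFinset.2 (mem_filter.1 hI).2

theorem exists_eventually_prod_one_add_absNorm_rpow_le :
    ∃ C : ℝ, ∀ᶠ s in 𝓝[>] (1 : ℝ), ∀ F : Finset (Ideal (𝓞 K)), (∀ P ∈ F, Prime P) →
      ∏ P ∈ F, (1 + ((Ideal.absNorm P : ℝ) ^ s)⁻¹) ≤ C / (s - 1) := by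
  classical
  obtain ⟨C, hC⟩ := exists_eventually_sum_absNorm_rpow_le K
  refine ⟨C, hC.mono fun s hs F hF => ?_⟩
  have hbot : ⊥ ∉ F.powerset.image fun T => ∏ P ∈ T, P := fun h => by
    obtain ⟨T, hT, hT0⟩ := mem_image.1 h
    exact prod_ne_zero_iff.2 (fun P hP => (hF P (mem_powerset.1 hT hP)).ne_zero) hT0
  refine le_trans (le_of_eq ?_) (hs _ hbot)
  rw [sum_image (prod_injOn_powerset_of_prime hF), prod_one_add]
  refine sum_congr rfl fun T _ => ?_
  rw [map_prod, Nat.cast_prod, ← Real.finsetProd_rpow _ _ fun P _ => Nat.cast_nonneg _,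
    prod_inv_distrib]

variable {K} {θ : 𝓞 K}

theorem discr_mem_conductor (B : PowerBasis ℚ K) (hB : B.gen = θ) {d : ℤ}
    (hd : (d : ℚ) = Algebra.discr ℚ B.basis) : (d : 𝓞 K) ∈ conductor ℤ θ := by
  refine mem_conductor_iff.2 fun b => ?_
  have hgen : IsIntegral ℤ B.gen := hB.symm ▸ θ.isIntegral_coe
  have hmem := Algebra.discr_mul_isIntegral_mem_adjoin ℚ hgen b.isIntegral_coe
  have hmap : (Algebra.adjoin ℤ {θ}).map (IsScalarTower.toAlgHom ℤ (𝓞 K) K) =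
      Algebra.adjoin ℤ {B.gen} := by
    rw [AlgHom.map_adjoin_singleton, hB]
    rfl
  rw [← hd, ← hmap] at hmem
  obtain ⟨y, hy, hyb⟩ := hmem
  have hy' : (d : 𝓞 K) * b = y := RingOfIntegers.ext <| by
    rw [show (y : K) = _ from hyb, Algebra.smul_def]
    simp
  exact hy' ▸ hy

theorem exponent_ne_zero_of_powerBasis (B : PowerBasis ℚ K) (hB : B.gen = θ) :
    RingOfIntegers.exponent θ ≠ 0 := by
  have hint : ∀ i, IsIntegral ℤ (B.basis i) := fun i => by
    rw [B.basis_eq_pow, hB]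
    exact θ.isIntegral_coe.pow _
  obtain ⟨d, hd⟩ := IsIntegrallyClosed.isIntegral_iff.1 (Algebra.discr_isIntegral ℚ hint)
  intro hexp
  have hdmem : d ∈ Ideal.under ℤ (conductor ℤ θ) := by
    simpa using discr_mem_conductor B hB hd
  rw [Ideal.absNorm_eq_zero_iff.1 hexp, Ideal.mem_bot] at hdmem
  refine Algebra.discr_not_zero_of_basis ℚ B.basis ?_
  rw [← hd, hdmem, map_zero]

theorem exists_ringHom_apply_eq_of_aeval_minpoly_eq_zero {p : ℕ} [Fact p.Prime]
    (hp : ¬p ∣ RingOfIntegers.exponent θ) {a : ZMod p} (ha : aeval a (minpoly ℤ θ) = 0) :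
    ∃ φ : 𝓞 K →+* ZMod p, φ θ = a := by
  let e := RingOfIntegers.ZModXQuotSpanEquivQuotSpan hp
  let evalAt := Ideal.Quotient.lift (Ideal.span {(minpoly ℤ θ).map (Int.castRingHom (ZMod p))})
    (evalRingHom a) fun q hq => by
      obtain ⟨c, rfl⟩ := Ideal.mem_span_singleton.1 hq
      rw [map_mul, coe_evalRingHom, eval_map, ← algebraMap_int_eq, ← aeval_def, ha, zero_mul]
  have he := RingOfIntegers.ZModXQuotSpanEquivQuotSpan_mk_apply hp X
  rw [aeval_X, map_X] at he
  refine ⟨(evalAt.comp e.symm.toRingHom).comp (Ideal.Quotient.mk _), ?_⟩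
  rw [RingHom.comp_apply, ← he]
  simp [evalAt, e]

theorem absNorm_ker_ringHom_zmod {p : ℕ} (φ : 𝓞 K →+* ZMod p) :
    Ideal.absNorm (RingHom.ker φ) = p := by
  rw [Ideal.absNorm_apply, Submodule.cardQuot_apply, Nat.card_congr
    (RingHom.quotientKerEquivOfSurjective (ZMod.ringHom_surjective φ)).toEquiv, Nat.card_zmod]

end NumberField

section RootCount

open Finset Polynomial NumberField Filter Topology

/-- The number `ρ_f(p)` of roots in `ZMod p` of an integer polynomial. -/
noncomputable def rootCount (f : ℤ[X]) (p : ℕ) : ℕ := {x : ZMod p | aeval x f = 0}.ncard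

theorem rootCount_le_natDegree {f : ℤ[X]} (hf : f.Monic) {p : ℕ} [Fact p.Prime] :
    rootCount f p ≤ f.natDegree := by
  refine le_trans (Set.ncard_le_ncard (fun x hx => ?_) (Set.toFinite _))
    (ncard_rootSet_le f (ZMod p))
  exact mem_rootSet'.2 ⟨(hf.map _).ne_zero, hx⟩

theorem rootCount_prod_le {s : Multiset ℤ[X]} [DecidableEq ℤ[X]] {p : ℕ} [Fact p.Prime] :
    rootCount s.prod p ≤ ∑ h ∈ s.toFinset, rootCount h p := by
  refine le_trans (Set.ncard_le_ncard (fun x hx => ?_) (Set.toFinite _))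
    (set_ncard_biUnion_le s.toFinset fun h => {x : ZMod p | aeval x h = 0})
  rw [Set.mem_ofPred_eq, map_multiset_prod, Multiset.prod_eq_zero_iff, Multiset.mem_map] at hx
  obtain ⟨h, hs, hx⟩ := hx
  exact Set.mem_biUnion (Multiset.mem_toFinset.2 hs) hx

theorem rootCount_minpoly_le_ncard_absNorm_eq {K : Type*} [Field K] [NumberField K] {θ : 𝓞 K}
    {p : ℕ} [Fact p.Prime] (hp : ¬p ∣ RingOfIntegers.exponent θ) :
    rootCount (minpoly ℤ θ) p ≤ {I : Ideal (𝓞 K) | I.absNorm = p}.ncard := by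
  choose φ hφ using fun a : {a : ZMod p | aeval a (minpoly ℤ θ) = 0} =>
    exists_ringHom_apply_eq_of_aeval_minpoly_eq_zero hp a.2
  have hfin : Finite {I : Ideal (𝓞 K) | I.absNorm = p} := Ideal.finite_setOfPred_absNorm_eq p
  rw [rootCount, ← Nat.card_coe_set_eq, ← Nat.card_coe_set_eq]
  refine Nat.card_le_card_of_injective
    (fun a => ⟨RingHom.ker (φ a), absNorm_ker_ringHom_zmod (φ a)⟩) fun a b hab => Subtype.ext ?_
  rw [← hφ a, ← hφ b, ZMod.ringHom_eq_of_ker_eq _ _ (congrArg Subtype.val hab)]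

theorem exists_eventually_prod_one_add_rpow_pow_rootCount_le {K : Type*} [Field K] [NumberField K]
    (θ : 𝓞 K) : ∃ C : ℝ, ∀ᶠ s in 𝓝[>] (1 : ℝ), ∀ P : Finset ℕ,
      (∀ p ∈ P, p.Prime ∧ ¬p ∣ RingOfIntegers.exponent θ) →
      ∏ p ∈ P, (1 + ((p : ℝ) ^ s)⁻¹) ^ rootCount (minpoly ℤ θ) p ≤ C / (s - 1) := by
  classical
  obtain ⟨C, hC⟩ := exists_eventually_prod_one_add_absNorm_rpow_le K
  refine ⟨C, hC.mono fun s hs P hP => ?_⟩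
  have hfin : ∀ p, {I : Ideal (𝓞 K) | I.absNorm = p}.Finite := Ideal.finite_setOfPred_absNorm_eq
  have hdisj : (P : Set ℕ).PairwiseDisjoint fun p => (hfin p).toFinset := fun p _ q _ hpq =>
    disjoint_left.2 fun I hI hI' =>
      hpq (((hfin p).mem_toFinset.1 hI).symm.trans ((hfin q).mem_toFinset.1 hI'))
  refine le_trans (prod_le_prod (fun p _ => by positivity) fun p hp => ?_)
    ((prod_biUnion hdisj).symm.trans_le (hs _ fun I hI => ?_))
  · have : Fact p.Prime := ⟨(hP p hp).1⟩
    rw [prod_congr rfl fun I hI => by rw [show I.absNorm = p from (hfin p).mem_toFinset.1 hI],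
      prod_const, ← Set.ncard_eq_toFinset_card _ (hfin p)]
    exact pow_le_pow_right₀ (le_add_of_nonneg_right (by positivity))
      (rootCount_minpoly_le_ncard_absNorm_eq (hP p hp).2)
  · obtain ⟨p, hp, hI⟩ := mem_biUnion.1 hI
    have hnorm : I.absNorm.Prime := ((hfin p).mem_toFinset.1 hI).symm ▸ (hP p hp).1
    refine Ideal.prime_of_isPrime (fun h => ?_) (Ideal.isPrime_of_irreducible_absNorm hnorm)
    exact hnorm.ne_zero (h ▸ Ideal.absNorm_bot)

theorem exists_numberField_minpoly_eq {h : ℤ[X]} (hh : h.Monic) (hirr : Irreducible h) :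
    ∃ (K : Type) (_ : Field K) (_ : NumberField K) (θ : 𝓞 K),
      minpoly ℤ θ = h ∧ RingOfIntegers.exponent θ ≠ 0 := by
  set q := h.map (algebraMap ℤ ℚ)
  have hq : q.Monic := hh.map _
  have : Fact (Irreducible q) := ⟨hh.irreducible_iff_irreducible_map_fraction_map.1 hirr⟩
  have hroot : aeval (AdjoinRoot.root q) h = 0 := by
    have hq0 := AdjoinRoot.eval₂_root q
    rwa [eval₂_map, Subsingleton.elim ((AdjoinRoot.of q).comp _) (algebraMap ℤ _)] at hq0
  let θ : 𝓞 (AdjoinRoot q) := ⟨AdjoinRoot.root q, h, hh, hroot⟩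
  have hdvd : minpoly ℤ θ ∣ h :=
    RingOfIntegers.minpoly_coe θ ▸ minpoly.isIntegrallyClosed_dvd θ.isIntegral_coe hroot
  refine ⟨AdjoinRoot q, inferInstance, inferInstance, θ, ?_,
    exponent_ne_zero_of_powerBasis (AdjoinRoot.powerBasis hq.ne_zero) rfl⟩
  exact eq_of_monic_of_associated (minpoly.monic θ.isIntegral) hh
    ((minpoly.irreducible θ.isIntegral).associated_of_dvd hirr hdvd)

end RootCount

section NormalizedFactors

open Polynomial UniqueFactorizationMonoid

variable {R : Type*} [CommRing R] [IsDomain R] [StrongNormalizationMonoid R]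
  [UniqueFactorizationMonoid R] {f : R[X]}

theorem monic_of_mem_normalizedFactors (hf : f.Monic) {h : R[X]} (hh : h ∈ normalizedFactors f) :
    h.Monic := by
  have hunit : IsUnit h.leadingCoeff := isUnit_of_dvd_one <|
    hf.leadingCoeff ▸ leadingCoeff_dvd_leadingCoeff (dvd_of_mem_normalizedFactors hh)
  rw [Monic, ← normalize_normalized_factor h hh, leadingCoeff_normalize, normalize_eq_one]
  exact hunit

theorem normalizedFactors_map_of_monic (K : Type*) [Field K] [DecidableEq K] [Algebra R K]
    [IsFractionRing R K] (hf : f.Monic) :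
    normalizedFactors (f.map (algebraMap R K)) =
      (normalizedFactors f).map (Polynomial.map (algebraMap R K)) := by
  have hmonic : ∀ h ∈ normalizedFactors f, h.Monic := fun h => monic_of_mem_normalizedFactors hf
  have hprod : (normalizedFactors f).prod = f := by
    rw [prod_normalizedFactors_eq hf.ne_zero, hf.normalize_eq_self]
  conv_lhs => rw [← hprod, Polynomial.map_multiset_prod]
  rw [normalizedFactors_prod_eq, Multiset.map_map]
  · exact Multiset.map_congr rfl fun h hh => ((hmonic h hh).map _).normalize_eq_self
  · intro q hq
    obtain ⟨h, hh, rfl⟩ := Multiset.mem_map.1 hq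
    exact (hmonic h hh).irreducible_iff_irreducible_map_fraction_map.1
      (irreducible_of_normalized_factor h hh)

end NormalizedFactors

theorem numDistinctIrredFactors_eq [DecidableEq (Polynomial ℤ)] {f : Polynomial ℤ} (hf : f.Monic) :
    numDistinctIrredFactors f = (UniqueFactorizationMonoid.normalizedFactors f).toFinset.card := by
  rw [numDistinctIrredFactors, ← algebraMap_int_eq,
    normalizedFactors_map_of_monic ℚ hf, Multiset.toFinset_map, Finset.card_image_of_injective]
  exact Polynomial.map_injective _ (RingHom.injective_int _)

section PolynomialMertens

open Finset Polynomial Filter Topology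

theorem one_div_le_log_one_add_inv_rpow_add {x s : ℝ} (hx : 1 ≤ x) (hs : 1 ≤ s) :
    1 / x ≤ Real.log (1 + (x ^ s)⁻¹) + (1 / x ^ 2 + (s - 1) * (Real.log x / x)) := by
  have hx0 : 0 < x := one_pos.trans_le hx
  set u := (x ^ s)⁻¹
  have hu0 : 0 < u := by positivity
  have hu_le : u ≤ 1 / x := by
    rw [one_div]
    exact inv_anti₀ hx0 (Real.self_le_rpow_of_one_le hx hs)
  have hu_ge : 1 / x * (1 - (s - 1) * Real.log x) ≤ u := by
    have hu : u = 1 / x * Real.exp (-((s - 1) * Real.log x)) := by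
      rw [one_div, ← Real.rpow_neg_one, mul_comm (s - 1), ← mul_neg, ← Real.rpow_def_of_pos hx0,
        ← Real.rpow_add hx0, show -1 + -(s - 1) = -s by ring, Real.rpow_neg hx0.le]
    rw [hu]
    gcongr
    exact Real.one_sub_le_exp_neg _
  have hlog : u - u ^ 2 ≤ Real.log (1 + u) := by
    refine le_trans ?_ (Real.one_sub_inv_le_log_of_pos (by positivity))
    rw [le_sub_comm, inv_le_iff_one_le_mul₀ (by positivity)]
    nlinarith [pow_pos hu0 3]
  have hsq : u ^ 2 ≤ 1 / x ^ 2 := by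
    rw [← one_div_pow]
    gcongr
  have hsplit : 1 / x * (1 - (s - 1) * Real.log x) = 1 / x - (s - 1) * (Real.log x / x) := by ring
  linarith

theorem sum_rootCount_div_le {h : ℤ[X]} (hh : h.Monic) {P : Finset ℕ} (hP : ∀ p ∈ P, p.Prime)
    {s : ℝ} (hs : 1 ≤ s) :
    ∑ p ∈ P, (rootCount h p : ℝ) / p ≤
      Real.log (∏ p ∈ P, (1 + ((p : ℝ) ^ s)⁻¹) ^ rootCount h p) +
        h.natDegree * (∑ p ∈ P, 1 / (p : ℝ) ^ 2 + (s - 1) * ∑ p ∈ P, Real.log p / p) := by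
  have hne : ∀ p ∈ P, (1 + ((p : ℝ) ^ s)⁻¹) ^ rootCount h p ≠ 0 := fun p _ => by positivity
  rw [Real.log_prod hne, mul_sum, ← sum_add_distrib, mul_sum, ← sum_add_distrib]
  refine sum_le_sum fun p hp => ?_
  have : Fact p.Prime := ⟨hP p hp⟩
  have hp1 : (1 : ℝ) ≤ p := mod_cast (hP p hp).one_le
  have hd : (rootCount h p : ℝ) ≤ h.natDegree := mod_cast rootCount_le_natDegree hh
  have := sub_nonneg.2 hs
  have := Real.log_nonneg hp1
  calc (rootCount h p : ℝ) / p = rootCount h p * (1 / p) := by ring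
    _ ≤ rootCount h p * (Real.log (1 + ((p : ℝ) ^ s)⁻¹) +
          (1 / (p : ℝ) ^ 2 + (s - 1) * (Real.log p / p))) := by
        gcongr
        exact one_div_le_log_one_add_inv_rpow_add hp1 hs
    _ ≤ _ := by
        rw [Real.log_pow, mul_add]
        gcongr

theorem sum_rootCount_div_le_of_dvd {h : ℤ[X]} (hh : h.Monic) {P : Finset ℕ}
    (hP : ∀ p ∈ P, p.Prime) {e : ℕ} (he : e ≠ 0) :
    ∑ p ∈ P with p ∣ e, (rootCount h p : ℝ) / p ≤ h.natDegree * #e.primeFactors := by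
  have hsub : {p ∈ P | p ∣ e} ⊆ e.primeFactors := fun p hp => by
    obtain ⟨hpP, hpe⟩ := mem_filter.1 hp
    exact Nat.mem_primeFactors.2 ⟨hP p hpP, hpe, he⟩
  rw [mul_comm, ← nsmul_eq_mul]
  refine (sum_le_sum_of_subset_of_nonneg hsub fun p _ _ => by positivity).trans
    (sum_le_card_nsmul _ _ _ fun p hp => ?_)
  have hprime := Nat.prime_of_mem_primeFactors hp
  have : Fact p.Prime := ⟨hprime⟩
  exact (div_le_self (by positivity) (mod_cast hprime.one_le)).trans
    (mod_cast rootCount_le_natDegree hh)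

theorem sum_one_div_sq_le_tsum (P : Finset ℕ) :
    ∑ p ∈ P, 1 / (p : ℝ) ^ 2 ≤ ∑' n : ℕ, 1 / (n : ℝ) ^ 2 :=
  (Real.summable_one_div_nat_pow.2 one_lt_two).sum_le_tsum P fun _ _ => by positivity

theorem tendsto_log_natCast_atTop : Tendsto (fun n : ℕ => Real.log n) atTop atTop :=
  Real.tendsto_log_atTop.comp tendsto_natCast_atTop_atTop

theorem tendsto_one_add_inv_log_natCast :
    Tendsto (fun n : ℕ => 1 + (Real.log n)⁻¹) atTop (𝓝[>] 1) := by
  refine tendsto_nhdsWithin_iff.2 ⟨?_, ?_⟩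
  · simpa using tendsto_log_natCast_atTop.inv_tendsto_atTop.const_add 1
  · filter_upwards [tendsto_log_natCast_atTop.eventually_gt_atTop 0] with n hn
    exact lt_add_of_pos_right 1 (inv_pos.2 hn)

theorem inv_log_mul_sum_log_div_le_two {z : ℕ} {P : Finset ℕ} (hP : P ⊆ z.primesLE)
    (hz : 0 < Real.log z) : (Real.log z)⁻¹ * ∑ p ∈ P, Real.log p / p ≤ 2 := by
  rw [inv_mul_le_iff₀ hz, mul_comm _ (2 : ℝ)]
  refine le_trans (sum_le_sum_of_subset_of_nonneg hP fun p _ _ => ?_) (sum_log_div_le_two_mul_log z)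
  exact div_nonneg (Real.log_natCast_nonneg p) p.cast_nonneg

theorem log_le_log_add_log_of_le_mul {x y C : ℝ} (hx : 0 < x) (hy : 0 < y) (h : x ≤ C * y) :
    Real.log x ≤ Real.log C + Real.log y := by
  have hC : 0 < C := pos_of_mul_pos_left (hx.trans_le h) hy.le
  rw [← Real.log_mul hC.ne' hy.ne']
  exact Real.log_le_log hx h

theorem exists_eventually_sum_rootCount_div_le_of_irreducible {h : ℤ[X]} (hh : h.Monic)
    (hirr : Irreducible h) :
    ∃ C : ℝ, ∀ᶠ z : ℕ in atTop,
      ∑ p ∈ z.primesLE, (rootCount h p : ℝ) / p ≤ Real.log (Real.log z) + C := by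
  obtain ⟨K, _, _, θ, rfl, he⟩ := exists_numberField_minpoly_eq hh hirr
  obtain ⟨C, hC⟩ := exists_eventually_prod_one_add_rpow_pow_rootCount_le θ
  set d : ℝ := ((minpoly ℤ θ).natDegree : ℝ)
  set e := RingOfIntegers.exponent θ
  set B := ∑' n : ℕ, 1 / (n : ℝ) ^ 2
  refine ⟨Real.log C + d * (B + 2) + d * #e.primeFactors, ?_⟩
  filter_upwards [tendsto_one_add_inv_log_natCast.eventually hC,
    tendsto_log_natCast_atTop.eventually_gt_atTop 0] with z hprod hz
  have hprimes : ∀ p ∈ z.primesLE, p.Prime := fun p => Nat.prime_of_mem_primesLE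
  set P := {p ∈ z.primesLE | ¬p ∣ e}
  have hP : ∀ p ∈ P, p.Prime := fun p hp => hprimes p (mem_filter.1 hp).1
  replace hprod := hprod P fun p hp => ⟨hP p hp, (mem_filter.1 hp).2⟩
  rw [add_sub_cancel_left, div_inv_eq_mul] at hprod
  have hmain := log_le_log_add_log_of_le_mul (prod_pos fun p _ => by positivity) hz hprod
  have hunram := sum_rootCount_div_le hh hP (le_add_of_nonneg_right (inv_pos.2 hz).le)
  rw [add_sub_cancel_left] at hunram
  have hram := sum_rootCount_div_le_of_dvd hh hprimes he
  rw [← sum_filter_add_sum_filter_not _ fun p => p ∣ e]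
  have hd : d * (∑ p ∈ P, 1 / (p : ℝ) ^ 2 + (Real.log z)⁻¹ * ∑ p ∈ P, Real.log p / p) ≤
      d * (B + 2) := by
    gcongr
    exacts [sum_one_div_sq_le_tsum P, inv_log_mul_sum_log_div_le_two (filter_subset _ _) hz]
  linarith

theorem exists_eventually_sum_rootCount_div_le {f : ℤ[X]} (hf : f.Monic) :
    ∃ C : ℝ, ∀ᶠ z : ℕ in atTop, ∑ p ∈ z.primesLE, (rootCount f p : ℝ) / p ≤
      numDistinctIrredFactors f * Real.log (Real.log z) + C := by
  classical
  set s := UniqueFactorizationMonoid.normalizedFactors f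
  have hprod : s.prod = f := by
    rw [UniqueFactorizationMonoid.prod_normalizedFactors_eq hf.ne_zero, hf.normalize_eq_self]
  have hfactor : ∀ h ∈ s.toFinset, ∃ C : ℝ, ∀ᶠ z : ℕ in atTop,
      ∑ p ∈ z.primesLE, (rootCount h p : ℝ) / p ≤ Real.log (Real.log z) + C := fun h hh =>
    exists_eventually_sum_rootCount_div_le_of_irreducible
      (monic_of_mem_normalizedFactors hf (Multiset.mem_toFinset.1 hh))
      (UniqueFactorizationMonoid.irreducible_of_normalized_factor h (Multiset.mem_toFinset.1 hh))
  choose! C hC using hfactor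
  refine ⟨∑ h ∈ s.toFinset, C h, ?_⟩
  filter_upwards [(eventually_all_finset _).2 hC] with z hz
  calc ∑ p ∈ z.primesLE, (rootCount f p : ℝ) / p
      ≤ ∑ p ∈ z.primesLE, ∑ h ∈ s.toFinset, (rootCount h p : ℝ) / p := by
        refine sum_le_sum fun p hp => ?_
        have : Fact p.Prime := ⟨Nat.prime_of_mem_primesLE hp⟩
        rw [← sum_div]
        gcongr
        exact_mod_cast hprod ▸ rootCount_prod_le (s := s)
    _ = ∑ h ∈ s.toFinset, ∑ p ∈ z.primesLE, (rootCount h p : ℝ) / p := sum_comm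
    _ ≤ ∑ h ∈ s.toFinset, (Real.log (Real.log z) + C h) := sum_le_sum hz
    _ = _ := by
        rw [sum_add_distrib, sum_const, nsmul_eq_mul, numDistinctIrredFactors_eq hf]

theorem exists_eventually_div_log_pow_le_prod_one_sub {f : ℤ[X]} (hf : f.Monic) :
    ∃ c : ℝ, 0 < c ∧ ∀ᶠ z : ℕ in atTop, ∀ P ⊆ z.primesLE, ∀ a : ℕ → ℕ,
      (∀ p ∈ P, a p ≤ rootCount f p ∧ 2 * f.natDegree ≤ p) →
      c / Real.log z ^ numDistinctIrredFactors f ≤ ∏ p ∈ P, (1 - (a p : ℝ) / p) := by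
  obtain ⟨C, hC⟩ := exists_eventually_sum_rootCount_div_le hf
  set B := ∑' n : ℕ, 1 / (n : ℝ) ^ 2
  set d := f.natDegree
  refine ⟨Real.exp (-(C + 2 * d ^ 2 * B)), Real.exp_pos _, ?_⟩
  filter_upwards [hC, tendsto_log_natCast_atTop.eventually_gt_atTop 0] with z hsum hz P hP a ha
  have hprime : ∀ p ∈ P, p.Prime := fun p hp => Nat.prime_of_mem_primesLE (hP hp)
  have hle : ∀ p ∈ P, a p ≤ d := fun p hp =>
    have : Fact p.Prime := ⟨hprime p hp⟩
    (ha p hp).1.trans (rootCount_le_natDegree hf)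
  have hexponent : ∑ p ∈ P, ((a p : ℝ) / p + 2 * ((a p : ℝ) / p) ^ 2) ≤
      numDistinctIrredFactors f * Real.log (Real.log z) + (C + 2 * d ^ 2 * B) := by
    calc ∑ p ∈ P, ((a p : ℝ) / p + 2 * ((a p : ℝ) / p) ^ 2)
        ≤ ∑ p ∈ P, ((rootCount f p : ℝ) / p + 2 * d ^ 2 * (1 / (p : ℝ) ^ 2)) := by
          refine sum_le_sum fun p hp => ?_
          rw [div_pow, mul_one_div, mul_div_assoc']
          gcongr
          exacts [(ha p hp).1, hle p hp]
      _ ≤ ∑ p ∈ z.primesLE, (rootCount f p : ℝ) / p + 2 * d ^ 2 * B := by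
          rw [sum_add_distrib, ← mul_sum]
          gcongr
          exact sum_one_div_sq_le_tsum P
      _ ≤ _ := by linarith
  calc Real.exp (-(C + 2 * d ^ 2 * B)) / Real.log z ^ numDistinctIrredFactors f
      = Real.exp (-(numDistinctIrredFactors f * Real.log (Real.log z) +
          (C + 2 * d ^ 2 * B))) := by
        rw [neg_add (_ * _), Real.exp_add, ← Real.log_pow, Real.exp_neg (Real.log _),
          Real.exp_log (pow_pos hz _), div_eq_inv_mul]
    _ ≤ ∏ p ∈ P, Real.exp (-((a p : ℝ) / p + 2 * ((a p : ℝ) / p) ^ 2)) := by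
        rw [← Real.exp_sum, sum_neg_distrib]
        exact Real.exp_le_exp.2 (neg_le_neg hexponent)
    _ ≤ _ := by
        refine prod_le_prod (fun p _ => (Real.exp_pos _).le) fun p hp => ?_
        exact exp_neg_add_two_mul_sq_le_one_sub <| natCast_div_mem_Icc_zero_half <|
          (Nat.mul_le_mul_left 2 (hle p hp)).trans (ha p hp).2

end PolynomialMertens

section PolynomialSieve

open Finset Polynomial Filter Topology

theorem rootCount_comp_C_add_C_mul_X_le {p : ℕ} [Fact p.Prime] (f : ℤ[X]) (a : ℤ) {b : ℤ}
    (hb : ¬(p : ℤ) ∣ b) : rootCount (f.comp (C a + C b * X)) p ≤ rootCount f p := by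
  have hb' : (b : ZMod p) ≠ 0 := mt (ZMod.intCast_zmod_eq_zero_iff_dvd b p).1 hb
  refine Set.ncard_le_ncard_of_injOn (fun x => a + b * x) (fun x hx => ?_)
    (fun x _ y _ hxy => mul_left_cancel₀ hb' (add_left_cancel hxy)) (Set.toFinite _)
  simpa [aeval_comp] using hx

theorem aeval_natCast_zmod_eq_zero_iff_dvd_eval (f : ℤ[X]) (n p : ℕ) :
    aeval (n : ZMod p) f = 0 ↔ (p : ℤ) ∣ f.eval (n : ℤ) := by
  rw [← ZMod.intCast_zmod_eq_zero_iff_dvd, ← Int.cast_natCast (R := ZMod p), ← eq_intCast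
    (algebraMap ℤ (ZMod p)) n, aeval_algebraMap_apply, coe_aeval_eq_eval, eq_intCast]

theorem tendsto_div_log_pow_atTop (k : ℕ) :
    Tendsto (fun x : ℝ => x / Real.log x ^ k) atTop atTop := by
  have hzero := (Real.isLittleO_pow_log_id_atTop (n := k)).tendsto_div_nhds_zero
  have hpos : ∀ᶠ x : ℝ in atTop, 0 < Real.log x ^ k / x := by
    filter_upwards [eventually_gt_atTop 1] with x hx
    have := Real.log_pos hx
    positivity
  refine (tendsto_nhdsWithin_iff.2 ⟨hzero, hpos⟩).inv_tendsto_nhdsGT_zero.congr fun x => ?_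
  exact inv_div _ _

theorem pow_le_mul_div_of_pow_succ_le {z c L N : ℝ} {E : ℕ} (hz : 0 ≤ z) (hc : 0 ≤ c) (hL : 0 < L)
    (hLz : L ≤ c * z) (hN : z ^ (E + 1) ≤ N) : z ^ E ≤ c * N / L := by
  rw [le_div_iff₀ hL]
  calc z ^ E * L ≤ z ^ E * (c * z) := by gcongr
    _ = c * z ^ (E + 1) := by ring
    _ ≤ c * N := by gcongr

theorem exists_eventually_mul_div_log_pow_le_card_forall_not_dvd_eval {f g : ℤ[X]} (hf : f.Monic)
    {D : ℕ} (hD : 2 * f.natDegree ≤ D)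
    (hfg : ∀ p : ℕ, p.Prime → D < p → rootCount g p ≤ rootCount f p) :
    ∃ c : ℝ, 0 < c ∧ ∃ E ≠ 0, ∀ᶠ z : ℕ in atTop, ∀ N : ℕ, z ^ E ≤ N →
      c * N / Real.log z ^ numDistinctIrredFactors f ≤
        #{n ∈ range N | ∀ p ∈ z.primesLE, D < p → ¬(p : ℤ) ∣ g.eval ((n : ℕ) : ℤ)} := by
  classical
  obtain ⟨c, hc, hprod⟩ := exists_eventually_div_log_pow_le_prod_one_sub hf
  obtain ⟨E, hE⟩ := exists_half_mul_prod_one_sub_sub_pow_le_card_sifted f.natDegree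
  have hbig := (tendsto_div_log_pow_atTop (numDistinctIrredFactors f)).comp
    tendsto_natCast_atTop_atTop
  refine ⟨c / 4, by positivity, E + 1, E.succ_ne_zero, ?_⟩
  filter_upwards [hprod, hbig.eventually_ge_atTop (4 / c), eventually_ge_atTop 2] with
    z hprod hbig hz N hN
  set L := Real.log z ^ numDistinctIrredFactors f
  have hL : 0 < L := pow_pos (Real.log_pos (mod_cast hz)) _
  set P := {p ∈ z.primesLE | D < p}
  have hP : ∀ p ∈ P, p.Prime ∧ p ≤ z ∧ D < p := fun p hp => by
    obtain ⟨hpz, hDp⟩ := mem_filter.1 hp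
    exact ⟨Nat.prime_of_mem_primesLE hpz, Nat.le_of_mem_primesLE hpz, hDp⟩
  have hcount : ∀ p ∈ P, rootCount g p ≤ rootCount f p ∧ 2 * f.natDegree ≤ p := fun p hp =>
    ⟨hfg p (hP p hp).1 (hP p hp).2.2, hD.trans (hP p hp).2.2.le⟩
  have hmain := hE z N P (fun p => {x | aeval x g = 0}) hz fun p hp =>
    have : Fact p.Prime := ⟨(hP p hp).1⟩
    ⟨(hP p hp).1, (hP p hp).2.1, (hcount p hp).2,
      (hcount p hp).1.trans (rootCount_le_natDegree hf)⟩
  have hdensity := hprod P (filter_subset _ _) (rootCount g) hcount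
  have hLz : L ≤ c / 4 * z := by linarith [(div_le_div_iff₀ hc hL).1 hbig]
  have herror : (z : ℝ) ^ E ≤ c / 4 * N / L :=
    pow_le_mul_div_of_pow_succ_le z.cast_nonneg (by positivity) hL hLz (mod_cast hN)
  have hsifted : #{n ∈ range N | ∀ p ∈ P, ((n : ℕ) : ZMod p) ∉ {x : ZMod p | aeval x g = 0}} ≤
      #{n ∈ range N | ∀ p ∈ z.primesLE, D < p → ¬(p : ℤ) ∣ g.eval ((n : ℕ) : ℤ)} := by
    refine card_le_card fun n hn => ?_
    obtain ⟨hnN, hn⟩ := mem_filter.1 hn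
    refine mem_filter.2 ⟨hnN, fun p hp hDp hdvd => hn p (mem_filter.2 ⟨hp, hDp⟩) ?_⟩
    exact (aeval_natCast_zmod_eq_zero_iff_dvd_eval g n p).2 hdvd
  calc c / 4 * N / L = N * (1 / 2 * (c / L)) - c / 4 * N / L := by ring
    _ ≤ N * (1 / 2 * ∏ p ∈ P, (1 - (rootCount g p : ℝ) / p)) - z ^ E := by gcongr
    _ ≤ _ := hmain.trans (mod_cast hsifted)

end PolynomialSieve

section AlmostPrimeValues

open Finset Polynomial Filter Topology

theorem exists_eval_add_eval_mul_eq {R : Type*} [CommRing R] (f : R[X]) (a q : R) :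
    ∃ t, f.eval (a + f.eval a * q) = f.eval a * (1 + q * t) := by
  obtain ⟨t, ht⟩ := sub_dvd_eval_sub (a + f.eval a * q) a f
  exact ⟨t, by linear_combination ht⟩

theorem pow_bigOmega_le_natAbs {n : ℤ} (hn : n ≠ 0) {z : ℕ}
    (hz : ∀ p : ℕ, p.Prime → (p : ℤ) ∣ n → z ≤ p) : z ^ bigOmega n ≤ n.natAbs := by
  rw [bigOmega, ArithmeticFunction.cardFactors_apply]
  conv_rhs => rw [← Nat.prod_primeFactorsList (Int.natAbs_ne_zero.2 hn)]
  exact List.pow_card_le_prod _ _ fun p hp => hz p (Nat.prime_of_mem_primeFactorsList hp)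
    (Int.natCast_dvd.2 (Nat.dvd_of_mem_primeFactorsList hp))

theorem bigOmega_mul {m n : ℤ} (hm : m ≠ 0) (hn : n ≠ 0) :
    bigOmega (m * n) = bigOmega m + bigOmega n := by
  rw [bigOmega, Int.natAbs_mul, ArithmeticFunction.cardFactors_mul (Int.natAbs_ne_zero.2 hm)
    (Int.natAbs_ne_zero.2 hn), bigOmega, bigOmega]

theorem eval_ne_zero_and_bigOmega_eval_le {f : ℤ[X]} {a q : ℤ} (ha : f.eval a ≠ 0) {D z v : ℕ}
    (hq : (D.factorial : ℤ) ∣ q) (hz : 2 ≤ z)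
    (hrough : ∀ p ∈ z.primesLE, D < p → ¬(p : ℤ) ∣ f.eval (a + f.eval a * q))
    (hsize : (f.eval (a + f.eval a * q)).natAbs ≤ z ^ v) :
    f.eval (a + f.eval a * q) ≠ 0 ∧
      bigOmega (f.eval (a + f.eval a * q)) ≤ bigOmega (f.eval a) + v := by
  obtain ⟨t, ht⟩ := exists_eval_add_eval_mul_eq f a q
  rw [ht] at hrough hsize ⊢
  have hlarge : ∀ p : ℕ, p.Prime → (p : ℤ) ∣ 1 + q * t → z < p := by
    intro p hp hpw
    by_contra! hpz
    refine hrough p (Nat.mem_primesLE.2 ⟨hpz, hp⟩) ?_ (hpw.mul_left _)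
    by_contra! hpD
    have hpq : (p : ℤ) ∣ q := (Int.natCast_dvd_natCast.2 (hp.dvd_factorial.2 hpD)).trans hq
    exact Nat.Prime.not_dvd_one hp <| Int.natCast_dvd_natCast.1 <| by
      simpa using (Int.dvd_add_left (hpq.mul_right t)).1 hpw
  have hw : 1 + q * t ≠ 0 := fun h =>
    (hlarge 2 Nat.prime_two (h ▸ dvd_zero _)).not_ge hz
  refine ⟨mul_ne_zero ha hw, ?_⟩
  rw [bigOmega_mul ha hw]
  refine Nat.add_le_add_left ((Nat.pow_le_pow_iff_right hz).1 ?_) _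
  calc z ^ bigOmega (1 + q * t) ≤ (1 + q * t).natAbs :=
        pow_bigOmega_le_natAbs hw fun p hp hpw => (hlarge p hp hpw).le
    _ ≤ (f.eval a * (1 + q * t)).natAbs := by
        rw [Int.natAbs_mul]
        exact Nat.le_mul_of_pos_left _ (Int.natAbs_pos.2 ha)
    _ ≤ z ^ v := hsize

theorem exists_natAbs_eval_natCast_le (f : ℤ[X]) : ∃ C : ℕ, ∀ m M : ℕ, m ≤ M → 1 ≤ M →
    (f.eval (m : ℤ)).natAbs ≤ C * M ^ f.natDegree := by
  refine ⟨∑ i ∈ range (f.natDegree + 1), (f.coeff i).natAbs, fun m M hmM hM => ?_⟩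
  rw [eval_eq_sum_range, sum_mul]
  refine (Int.natAbs_sum_le _ _).trans (sum_le_sum fun i hi => ?_)
  rw [Int.natAbs_mul, Int.natAbs_pow, Int.natAbs_natCast]
  exact Nat.mul_le_mul_left _
    ((Nat.pow_le_pow_left hmM i).trans (Nat.pow_le_pow_right hM (mem_range_succ_iff.1 hi)))

theorem eventually_natAbs_eval_natCast_le_pow (f : ℤ[X]) (L : ℕ) :
    ∀ᶠ N : ℕ in atTop, ∀ m ≤ L * N, (f.eval (m : ℤ)).natAbs ≤ N ^ (f.natDegree + 1) := by
  obtain ⟨C, hC⟩ := exists_natAbs_eval_natCast_le f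
  filter_upwards [eventually_ge_atTop (C * (L + 1) ^ f.natDegree), eventually_ge_atTop 1] with
    N hN hN1 m hm
  have hmN : m ≤ (L + 1) * N := hm.trans (Nat.mul_le_mul_right N L.le_succ)
  calc (f.eval (m : ℤ)).natAbs ≤ C * ((L + 1) * N) ^ f.natDegree :=
        hC m _ hmN (Nat.mul_pos L.succ_pos hN1)
    _ = C * (L + 1) ^ f.natDegree * N ^ f.natDegree := by rw [mul_pow, mul_assoc]
    _ ≤ N * N ^ f.natDegree := Nat.mul_le_mul_right _ hN
    _ = N ^ (f.natDegree + 1) := (pow_succ' _ _).symm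

theorem tendsto_nthRoot_atTop {k : ℕ} (hk : k ≠ 0) : Tendsto (Nat.nthRoot k) atTop atTop :=
  tendsto_atTop.2 fun b => (eventually_ge_atTop (b ^ k)).mono fun _ => (Nat.le_nthRoot_iff hk).2

theorem le_nthRoot_pow_two_mul {k n : ℕ} (hk : k ≠ 0) (hn : 2 ≤ Nat.nthRoot k n) :
    n ≤ Nat.nthRoot k n ^ (2 * k) := by
  rw [pow_mul]
  exact (Nat.lt_pow_nthRoot_add_one hk n).le.trans (Nat.pow_le_pow_left (by nlinarith) k)

theorem exists_one_le_eval_natCast_ne_zero {f : ℤ[X]} (hf : f ≠ 0) :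
    ∃ a : ℕ, 1 ≤ a ∧ f.eval (a : ℤ) ≠ 0 := by
  by_contra! h
  refine hf (eq_zero_of_infinite_isRoot f ?_)
  refine ((Set.Ici_infinite 1).image Nat.cast_injective.injOn).mono ?_
  rintro _ ⟨n, hn, rfl⟩
  exact h n hn

theorem not_dvd_sq_natAbs_mul_factorial {A : ℤ} (hA : A ≠ 0) {p D : ℕ} (hp : p.Prime)
    (hAD : A.natAbs ≤ D) (hDp : D < p) : ¬(p : ℤ) ∣ (A.natAbs ^ 2 * D.factorial : ℕ) := by
  rw [Int.natCast_dvd_natCast, hp.dvd_mul, hp.dvd_factorial, not_or]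
  refine ⟨fun h => ?_, hDp.not_ge⟩
  exact ((Nat.le_of_dvd (Int.natAbs_pos.2 hA) (hp.dvd_of_dvd_pow h)).trans hAD).not_gt hDp

/-- The positive integers at which `f` takes a nonzero value with at most `r` prime factors. -/
def almostPrimeArguments (f : ℤ[X]) (r : ℕ) : Set ℕ :=
  {m | 1 ≤ m ∧ f.eval (m : ℤ) ≠ 0 ∧ bigOmega (f.eval (m : ℤ)) ≤ r}

theorem add_mul_mem_almostPrimeArguments {f : ℤ[X]} {a D z v n : ℕ} (ha1 : 1 ≤ a)
    (ha : f.eval (a : ℤ) ≠ 0) (hz : 2 ≤ z)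
    (hrough : ∀ p ∈ z.primesLE, D < p →
      ¬(p : ℤ) ∣ f.eval ((a + (f.eval (a : ℤ)).natAbs ^ 2 * D.factorial * n : ℕ) : ℤ))
    (hsize : (f.eval ((a + (f.eval (a : ℤ)).natAbs ^ 2 * D.factorial * n : ℕ) : ℤ)).natAbs ≤
      z ^ v) :
    a + (f.eval (a : ℤ)).natAbs ^ 2 * D.factorial * n ∈
      almostPrimeArguments f (bigOmega (f.eval (a : ℤ)) + v) := by
  have hprogression : ((a + (f.eval (a : ℤ)).natAbs ^ 2 * D.factorial * n : ℕ) : ℤ) =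
      a + f.eval (a : ℤ) * (D.factorial * (f.eval (a : ℤ) * n)) := by
    push_cast [Int.natCast_natAbs, sq_abs]
    ring
  refine ⟨le_add_right ha1, ?_⟩
  rw [hprogression] at hrough hsize ⊢
  exact eval_ne_zero_and_bigOmega_eval_le ha (dvd_mul_right _ _) hz hrough hsize

theorem exists_eventually_le_ncard_mem_almostPrimeArguments {f : ℤ[X]} (hf : f.Monic) :
    ∃ (a Q r : ℕ) (c : ℝ), 1 ≤ Q ∧ 1 ≤ r ∧ 0 < c ∧ ∀ᶠ N : ℕ in atTop,
      c * N / Real.log N ^ numDistinctIrredFactors f ≤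
        {n : ℕ | n < N ∧ a + Q * n ∈ almostPrimeArguments f r}.ncard := by
  obtain ⟨a, ha1, ha⟩ := exists_one_le_eval_natCast_ne_zero hf.ne_zero
  set A := f.eval (a : ℤ)
  set D := A.natAbs + 2 * f.natDegree
  set Q := A.natAbs ^ 2 * D.factorial
  obtain ⟨c, hc, E, hE, hsieve⟩ := exists_eventually_mul_div_log_pow_le_card_forall_not_dvd_eval
    (g := f.comp (C (a : ℤ) + C (Q : ℤ) * X)) hf (D := D) (Nat.le_add_left _ _) fun p hp hDp =>
      have : Fact p.Prime := ⟨hp⟩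
      rootCount_comp_C_add_C_mul_X_le f a
        (not_dvd_sq_natAbs_mul_factorial ha hp (Nat.le_add_right _ _) hDp)
  have hroot := tendsto_nthRoot_atTop hE
  have hQ : 1 ≤ Q := Nat.mul_pos (pow_pos (Int.natAbs_pos.2 ha) 2) D.factorial_pos
  have hv : 1 ≤ 2 * E * (f.natDegree + 1) :=
    Nat.mul_pos (Nat.mul_pos two_pos (Nat.pos_of_ne_zero hE)) (Nat.succ_pos _)
  refine ⟨a, Q, bigOmega A + 2 * E * (f.natDegree + 1), c, hQ, le_add_left hv, hc, ?_⟩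
  filter_upwards [hroot.eventually hsieve, hroot.eventually_ge_atTop 2,
    eventually_natAbs_eval_natCast_le_pow f (a + Q)] with N hsieve hz hsize
  set z := Nat.nthRoot E N
  have hzN : z ^ E ≤ N := (Nat.le_nthRoot_iff hE).1 le_rfl
  have hlogz : 0 < Real.log z := Real.log_pos (mod_cast hz)
  have hlog : Real.log z ≤ Real.log N :=
    Real.log_le_log (by positivity) (mod_cast (Nat.le_self_pow hE z).trans hzN)
  calc c * N / Real.log N ^ numDistinctIrredFactors f
      ≤ c * N / Real.log z ^ numDistinctIrredFactors f := by gcongr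
    _ ≤ _ := hsieve N hzN
    _ ≤ _ := Nat.cast_le.2 <| (Set.ncard_coe_finset _).symm.trans_le <|
        Set.ncard_le_ncard (fun n hn => ?_) ((Set.finite_Iio N).subset (Set.sep_subset _ _))
  obtain ⟨hnN, hn⟩ := mem_filter.1 hn
  have hle : a + Q * n ≤ (a + Q) * N := by nlinarith [mem_range.1 hnN]
  replace hsize := (hsize _ hle).trans (Nat.pow_le_pow_left (le_nthRoot_pow_two_mul hE hz) _)
  rw [← pow_mul] at hsize
  refine ⟨mem_range.1 hnN, add_mul_mem_almostPrimeArguments ha1 ha hz (fun p hp hDp => ?_) hsize⟩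
  simpa [A, Q] using hn p hp hDp

theorem ncard_add_mul_mem_le {S : Set ℕ} {a Q N : ℕ} {X : ℝ} (hQ : 1 ≤ Q)
    (hX : N * (a + Q : ℝ) ≤ X) :
    {n : ℕ | n < N ∧ a + Q * n ∈ S}.ncard ≤ {m ∈ S | (m : ℝ) ≤ X}.ncard := by
  refine Set.ncard_le_ncard_of_injOn (fun n => a + Q * n) (fun n hn => ⟨hn.2, ?_⟩)
    (fun m _ n _ hmn => Nat.eq_of_mul_eq_mul_left hQ (Nat.add_left_cancel hmn))
    ((Set.finite_Iic ⌊X⌋₊).subset fun m hm => Nat.le_floor hm.2)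
  have hle : a + Q * n ≤ N * (a + Q) := by nlinarith [hn.1]
  exact le_trans (by exact_mod_cast hle) hX

theorem exists_eventually_mul_div_log_pow_le_ncard {S : Set ℕ} {a Q k : ℕ} {c : ℝ}
    (hQ : 1 ≤ Q) (hc : 0 < c) (hS : ∀ᶠ N : ℕ in atTop,
      c * N / Real.log N ^ k ≤ {n : ℕ | n < N ∧ a + Q * n ∈ S}.ncard) :
    ∃ c' : ℝ, 0 < c' ∧ ∀ᶠ X : ℝ in atTop,
      c' * X / Real.log X ^ k ≤ {m ∈ S | (m : ℝ) ≤ X}.ncard := by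
  set L : ℝ := a + Q
  have hL : 1 ≤ L := le_add_of_nonneg_of_le a.cast_nonneg (mod_cast hQ)
  have hL0 : 0 < L := one_pos.trans_le hL
  have hfloor : Tendsto (fun X : ℝ => ⌊X / L⌋₊) atTop atTop :=
    tendsto_nat_floor_atTop.comp (tendsto_id.atTop_div_const hL0)
  refine ⟨c / (2 * L), by positivity, ?_⟩
  filter_upwards [hfloor.eventually hS, hfloor.eventually_ge_atTop 2, eventually_ge_atTop 0] with
    X hcard hN hX
  set N := ⌊X / L⌋₊
  have hN2 : (2 : ℝ) ≤ N := mod_cast hN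
  have hNX : N * L ≤ X := (le_div_iff₀ hL0).1 (Nat.floor_le (div_nonneg hX hL0.le))
  have hXN : X / (2 * L) ≤ N := by
    have hlt := Nat.lt_floor_add_one (X / L)
    rw [mul_comm, ← div_div, div_le_iff₀ two_pos]
    linarith
  have hlog : Real.log N ≤ Real.log X :=
    Real.log_le_log (by linarith) ((le_mul_of_one_le_right N.cast_nonneg hL).trans hNX)
  have hlog0 : 0 < Real.log N := Real.log_pos (by linarith)
  calc c / (2 * L) * X / Real.log X ^ k = c * (X / (2 * L)) / Real.log X ^ k := by ring
    _ ≤ c * N / Real.log N ^ k := by gcongr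
    _ ≤ _ := hcard
    _ ≤ _ := Nat.cast_le.2 (ncard_add_mul_mem_le hQ hNX)

theorem infinite_of_eventually_mul_div_log_pow_le_ncard {S : Set ℕ} {k : ℕ} {c : ℝ} (hc : 0 < c)
    (hS : ∀ᶠ X : ℝ in atTop,
      c * X / Real.log X ^ k ≤ ({m ∈ S | (m : ℝ) ≤ X}.ncard : ℝ)) : S.Infinite := by
  intro hfin
  have hlarge := (tendsto_div_log_pow_atTop k).const_mul_atTop hc
  obtain ⟨X, hX, hXS⟩ := ((hlarge.eventually_gt_atTop (S.ncard : ℝ)).and hS).exists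
  rw [← mul_div_assoc] at hX
  exact (hX.trans_le hXS).not_ge (mod_cast Set.ncard_le_ncard (Set.sep_subset _ _) hfin)

end AlmostPrimeValues

theorem stmt14 (f : Polynomial ℤ) (hmonic : f.Monic) (hdeg : 1 ≤ f.natDegree) :
    ∃ (r : ℕ) (c X₀ : ℝ), 1 ≤ r ∧ 0 < c ∧
      (∀ X : ℝ, X₀ ≤ X →
        c * X / Real.log X ^ numDistinctIrredFactors f ≤
          (Nat.card {m : ℕ // 1 ≤ m ∧ (m : ℝ) ≤ X ∧ Polynomial.eval (m : ℤ) f ≠ 0 ∧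
            bigOmega (Polynomial.eval (m : ℤ) f) ≤ r} : ℝ)) ∧
      {m : ℕ | 1 ≤ m ∧ Polynomial.eval (m : ℤ) f ≠ 0 ∧
        bigOmega (Polynomial.eval (m : ℤ) f) ≤ r}.Infinite := by
  obtain ⟨a, Q, r, c, hQ, hr, hc, hcard⟩ :=
    exists_eventually_le_ncard_mem_almostPrimeArguments hmonic
  obtain ⟨c', hc', hcard'⟩ := exists_eventually_mul_div_log_pow_le_ncard hQ hc hcard
  obtain ⟨X₀, hX₀⟩ := Filter.eventually_atTop.1 hcard'
  refine ⟨r, c', X₀, hr, hc', fun X hX => (hX₀ X hX).trans_eq ?_,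
    infinite_of_eventually_mul_div_log_pow_le_ncard hc' hcard'⟩
  rw [← Nat.card_coe_set_eq]
  refine congrArg Nat.cast (Nat.card_congr (Equiv.subtypeEquivRight fun m => ?_))
  simp only [almostPrimeArguments, Set.mem_ofPred_eq]
  tauto
end
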